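/- arXiv:1708.08034 — 2 statements merged into one kernel-verified Lean document; each statement's English description precedes it below -/
import Mathlib

section
/- Let M be an associative ℂ-algebra, E : M → ℂ a linear functional, fix α,β,t,γ ∈ ℂ, and let W_n : M^n → Γ(M) be the multilinear maps determined by W() = 1, W(a₁) = X(a₁) − αE(a₁), and for n ≥ 1: W(a₁,…,a_{n+1}) = W(a₁,…,a_n)·X(a_{n+1}) − α·E(a_{n+1})·W(a₁,…,a_n) − β·W(a₁,…,a_{n−1}, a_n a_{n+1}) − t·E(a_n a_{n+1})·W(a₁,…,a_{n−1}) − γ·W(a₁,…,a_{n−2}, a_{n−1} a_n a_{n+1}), where the γ-term is omitted when n = 1. Then for all a₁,…,a_n ∈ M: X(a₁)X(a₂)⋯X(a_n) = Σ_{(π,S) ∈ INC(n)} C^{(π,S)}_{α,β,t,γ} · (Π_{U ∈ π∖S} E(a_U)) · W(a_{V₁},…,a_{V_m}), where V₁,…,V_m are the open blocks of (π,S) listed in increasing order (for distinct outer blocks U,V of a non-crossing partition, either max U < min V or max V < min U). -/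
/-!
The product `X(a₁)⋯X(aₙ)` is expanded one letter at a time. Suppose the product of the first `n`
letters is a sum of terms `c • W(b₁, …, b_m)`, where `b₁, …, b_m` are the products of the letters over
the open blocks of a triple `(π, S, σ)`. Solving the recursion for `W(b₁, …, b_m) * X(a)` gives five
summands, and each of them is a way of adding a new last point to the triple:

* `W(b₁, …, b_m, a)`: the point is a new open singleton;
* `α E(a)`: it is a new closed singleton;
* `β`: it joins the last open block in `π`, and in `σ` the block containing the minimum of that open
  block, which stays open;
* `t`: the same, and the block is closed;
* `γ`: it is merged with the last two open blocks into one open block of `π`, while in `σ` it joins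
  only the block containing the minimum of the second of the two.

Conversely, every triple on `n + 1` points arises from exactly one triple on `n` points. The last
point `n` is a singleton of `π`, or lies in the same `σ`-block as the minimum of its `π`-block, or
neither; in the third case its block is open, and cutting it at the minimum of the `σ`-block of `n`
recovers the two merged blocks. This is `valid_of_child` and `parent_valid`. Hence the product is the
sum over all triples of a weight which is multiplied by `1`, `αE`, `β`, `tE` or `γ` at each step
(`val_step`, `sum_val`). Each step changes `|σ|`, `|π|`, `|S|` and the number of closed singletons in a
way that identifies this weight with the corresponding summand of `C^{(π,S)}` times the product of
the `E(a_U)` (`Kc_A`, …, `Kc_E`), which also shows that the exponents of `β` and `γ` are not negative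
(`count_inv`).

Triples are coded by the functions sending a point to the minimum of its block (`St`), for which the
five extensions are explicit. The code is translated back to sets of subsets of `Fin n` in
`Pre.valid_iff`, `term_eq` and `sum_transfer`.
-/

open Finset
open scoped Classical

noncomputable section

/-- A partition of `Fin n`, given by its (finite) set of blocks. -/
def IsPartition {n : ℕ} (P : Finset (Finset (Fin n))) : Prop :=
  (∀ B ∈ P, B.Nonempty) ∧ ∀ i : Fin n, ∃! B : Finset (Fin n), B ∈ P ∧ i ∈ B

/-- Refinement order on partitions. -/
def Refines {n : ℕ} (P Q : Finset (Finset (Fin n))) : Prop :=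
  ∀ B ∈ P, ∃ C ∈ Q, B ⊆ C

/-- Non-crossing partitions. -/
def IsNoncrossing {n : ℕ} (P : Finset (Finset (Fin n))) : Prop :=
  ¬ ∃ U ∈ P, ∃ V ∈ P, U ≠ V ∧ ∃ i ∈ U, ∃ k ∈ U, ∃ j ∈ V, ∃ l ∈ V,
      i < j ∧ j < k ∧ k < l

/-- Outer blocks. -/
def IsOuter {n : ℕ} (P : Finset (Finset (Fin n))) (V : Finset (Fin n)) : Prop :=
  ¬ ∃ U ∈ P, U ≠ V ∧ ∃ i ∈ U, ∃ j ∈ U, ∀ x ∈ V, i < x ∧ x < j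

/-- For `U = {i₁ < … < iₘ}`, the ordered product `a_{i₁} ⋯ a_{iₘ}`. -/
def aProd {M : Type*} [Ring M] {n : ℕ} (a : Fin n → M) (B : Finset (Fin n)) : M :=
  ((B.sort (· ≤ ·)).map a).prod

/-- The block of `P` containing `i`. -/
def blockOf {n : ℕ} (P : Finset (Finset (Fin n))) (i : Fin n) : Finset (Fin n) :=
  Finset.univ.filter fun x => ∃ B ∈ P, i ∈ B ∧ x ∈ B

/-- The largest elements of the blocks of `T`, in increasing order. -/
def maxElts {n : ℕ} (T : Finset (Finset (Fin n))) : List (Fin n) :=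
  (Finset.univ.filter fun i : Fin n => ∃ B ∈ T, i ∈ B ∧ ∀ x ∈ B, x ≤ i).sort (· ≤ ·)

/-- The coefficient `C^{(π,S)}_{α,β,t,γ}`. -/
def Ccoef {n : ℕ} (α β t γ : ℂ) (π S : Finset (Finset (Fin n))) : ℂ :=
  ∑ σ ∈ Finset.univ.filter (fun σ : Finset (Finset (Fin n)) =>
      IsPartition σ ∧ IsNoncrossing σ ∧ Refines σ π
        ∧ (∀ U ∈ π, U ∉ S → ∃ C ∈ σ, ∃ m ∈ U, ∃ M ∈ U, m ∈ C ∧ M ∈ C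
              ∧ (∀ x ∈ U, m ≤ x) ∧ (∀ x ∈ U, x ≤ M))
        ∧ (∀ B ∈ σ, B.card = 1 →
            (B ∈ π ∨ ∃ V ∈ S, ∃ x ∈ B, x ∈ V ∧ ∀ y ∈ V, x ≤ y))),
    α ^ ((π \ S).filter fun U => U.card = 1).card
      * β ^ (n + S.card + ((π \ S).filter fun U => U.card = 1).card - 2 * σ.card)
      * t ^ ((π \ S).filter fun U => 2 ≤ U.card).card
      * γ ^ (σ.card - π.card)

/-! ### States and their five extensions -/

/-- A code for a triple `(π, S, σ)` on `{0, …, n-1}`: `p i` and `s i` are the minima of the blocks of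
`π` and of `σ` containing `i` (both are the identity from `n` on), and the list `S` holds the minima
of the open blocks, largest first. The codomain `ℕ` does not depend on `n`, so that appending the
point `n` changes the code only locally. -/
structure St where
  p : ℕ → ℕ
  s : ℕ → ℕ
  S : List ℕ

/-- The state codes a triple `(π, S, σ)` that contributes to the right-hand side: `π` and `σ` are
non-crossing, `σ` refines `π`, the open blocks are outer, the extremes of a closed block lie in one
block of `σ` (`closed`), and a singleton of `σ` is a singleton of `π` or the minimum of an open block
(`sing`). In `outer` it is enough to compare with the minimum `v` of the block, as `π` is
non-crossing. -/
structure Valid (n : ℕ) (q : St) : Prop where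
  p_ge : ∀ i, n ≤ i → q.p i = i
  s_ge : ∀ i, n ≤ i → q.s i = i
  p_le : ∀ i, q.p i ≤ i
  s_le : ∀ i, q.s i ≤ i
  p_idem : ∀ i, q.p (q.p i) = q.p i
  s_idem : ∀ i, q.s (q.s i) = q.s i
  p_nc : ∀ i j k l, i < j → j < k → k < l → q.p i = q.p k → q.p j = q.p l → q.p i = q.p j
  s_nc : ∀ i j k l, i < j → j < k → k < l → q.s i = q.s k → q.s j = q.s l → q.s i = q.s j
  ref : ∀ i, q.p (q.s i) = q.p i
  sorted : q.S.Pairwise (· > ·)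
  S_lt : ∀ v ∈ q.S, v < n
  S_root : ∀ v ∈ q.S, q.p v = v
  outer : ∀ v ∈ q.S, ∀ i j, i < v → v < j → q.p i ≠ q.p j
  closed : ∀ j < n, q.p j ∉ q.S → (∀ k, q.p k = q.p j → k ≤ j) → q.s j = q.p j
  sing : ∀ i < n, q.s i = i → (∀ j, q.s j = i → j = i) →
    q.p i = i ∧ (i ∈ q.S ∨ ∀ j, q.p j = i → j = i)

/-- Add the point `n` as an open singleton. -/
def chA (n : ℕ) (q : St) : St := ⟨q.p, q.s, n :: q.S⟩
/-- Add the point `n` as a closed singleton; the code already treats points from `n` on as singletons. -/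
def chB (q : St) : St := q
/-- Add `n` to the last open block, with minimum `v`, and to the `σ`-block of `v`; the block stays open. -/
def chC (n v : ℕ) (q : St) : St := ⟨fun i => if i = n then v else q.p i, fun i => if i = n then v else q.s i, q.S⟩
/-- Add `n` to the last open block, with minimum `v`, and to the `σ`-block of `v`, and close the block. -/
def chD (n v : ℕ) (q : St) (r : List ℕ) : St := ⟨fun i => if i = n then v else q.p i, fun i => if i = n then v else q.s i, r⟩
/-- Merge the last two open blocks, with minima `u < v`, and the point `n` into one open block, while
in `σ` the point `n` joins only the block of `v`. -/
def chE (n v u : ℕ) (q : St) (r : List ℕ) : St :=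
  ⟨fun i => if i = n ∨ q.p i = v then u else q.p i, fun i => if i = n then v else q.s i, u :: r⟩

/-- The states on `n + 1` points obtained from `q` by appending the point `n`. -/
def children (n : ℕ) (q : St) : Finset St :=
  match q.S with
  | [] => {chA n q, chB q}
  | [v] => {chA n q, chB q, chC n v q, chD n v q []}
  | v :: u :: r => {chA n q, chB q, chC n v q, chD n v q (u :: r), chE n v u q r}

/-- The state on `n` points from which a state on `n + 1` points arises. A merge of two open blocks
is recognised by `q.p n ≠ q.s n`, and the two blocks are separated again at `q.s n`. -/
def parent (n : ℕ) (q : St) : St where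
  s := fun i => if i = n then n else q.s i
  p := if q.p n = n ∨ q.p n = q.s n then fun i => if i = n then n else q.p i
    else fun i => if i = n then n else if q.p i = q.p n ∧ q.s n ≤ i then q.s n else q.p i
  S := if q.p n = n then (if n ∈ q.S then q.S.tail else q.S)
    else if q.p n = q.s n ∧ q.p n ∈ q.S then q.S else q.s n :: q.S

theorem validA {n q} (h : Valid n q) : Valid (n+1) (chA n q) where
  p_ge i hi := h.p_ge i (by omega)
  s_ge i hi := h.s_ge i (by omega)
  p_le := h.p_le
  s_le := h.s_le
  p_idem := h.p_idem
  s_idem := h.s_idem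
  p_nc := h.p_nc
  s_nc := h.s_nc
  ref := h.ref
  sorted := List.pairwise_cons.2 ⟨h.S_lt, h.sorted⟩
  S_lt := by
    have := h.S_lt
    simp only [chA, List.mem_cons]; grind
  S_root := by
    have := h.S_root
    have := h.p_ge n le_rfl
    simp only [chA, List.mem_cons]; grind
  outer := by
    simp only [chA, List.mem_cons]
    rintro v (rfl | hv) i j hi hj
    · have := h.p_ge j (by omega)
      have := h.p_le i
      omega
    · exact h.outer v hv i j hi hj
  closed := by
    simp only [chA, List.mem_cons]
    intro j hj h1 h2
    have := h.p_ge n le_rfl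
    have := h.s_ge n le_rfl
    rcases Nat.lt_succ_iff_lt_or_eq.1 hj with h' | rfl
    · exact h.closed j h' (by tauto) h2
    · omega
  sing := by
    simp only [chA, List.mem_cons]
    intro i hi h1 h2
    have := h.p_ge n le_rfl
    rcases Nat.lt_succ_iff_lt_or_eq.1 hi with h' | rfl
    · have := h.sing i h' h1 h2
      tauto
    · tauto

theorem validB {n q} (h : Valid n q) : Valid (n+1) (chB q) where
  p_ge i hi := h.p_ge i (by omega)
  s_ge i hi := h.s_ge i (by omega)
  p_le := h.p_le
  s_le := h.s_le
  p_idem := h.p_idem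
  s_idem := h.s_idem
  p_nc := h.p_nc
  s_nc := h.s_nc
  ref := h.ref
  sorted := h.sorted
  S_lt v hv := Nat.lt_succ_of_lt (h.S_lt v hv)
  S_root := h.S_root
  outer := h.outer
  closed := by
    intro j hj h1 h2
    rcases Nat.lt_succ_iff_lt_or_eq.1 hj with h' | rfl
    · exact h.closed j h' h1 h2
    · exact (h.s_ge j le_rfl).trans (h.p_ge j le_rfl).symm
  sing := by
    intro i hi h1 h2
    rcases Nat.lt_succ_iff_lt_or_eq.1 hi with h' | rfl
    · exact h.sing i h' h1 h2
    · refine ⟨h.p_ge i le_rfl, Or.inr fun j hj => ?_⟩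
      by_contra hne
      have h1 := h.p_le j
      have := h.p_ge j (by simp only [chB] at hj; omega)
      simp only [chB] at hj
      omega

theorem s_root {n q} (h : Valid n q) (v) (hv : v ∈ q.S) : q.s v = v := by
  have h1 := h.s_le v
  have h2 := h.ref v
  have h3 := h.p_le (q.s v)
  have h4 := h.S_root v hv
  omega

/-- A non-crossing family of classes stays non-crossing when the point `n` is added to the class of a
minimum `v` that no other class covers. -/
theorem nc_append {n v : ℕ} {f : ℕ → ℕ} (hge : ∀ i, n ≤ i → f i = i) (hle : ∀ i, f i ≤ i) (hv : f v = v) (hvn : v < n)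
    (hnc : ∀ i j k l, i < j → j < k → k < l → f i = f k → f j = f l → f i = f j)
    (hout : ∀ i j, i < v → v < j → f i ≠ f j) (i j k l : ℕ) (hij : i < j) (hjk : j < k) (hkl : k < l) :
    (if i = n then v else f i) = (if k = n then v else f k) →
    (if j = n then v else f j) = (if l = n then v else f l) →
    (if i = n then v else f i) = (if j = n then v else f j) := by
  intro h1 h2
  by_cases hl : l < n
  · rw [if_neg (by omega), if_neg (by omega)] at *
    exact hnc i j k l hij hjk hkl h1 h2
  by_cases hl' : l = n
  · subst hl'
    simp only [if_true, if_neg (show i ≠ l by omega), if_neg (show j ≠ l by omega), if_neg (show k ≠ l by omega)] at *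
    have := hle j
    rcases lt_trichotomy i v with h | h | h
    · exact absurd h1 (hout i k h (by omega))
    · subst h; omega
    · have := hnc v i j k h (by omega) (by omega) (by omega) h1
      omega
  · rw [if_neg hl', hge l (by omega)] at h2
    split_ifs at h2 <;> have := hle j <;> omega

theorem ne_of_ne {n : ℕ} {f : ℕ → ℕ} (hge : ∀ i, n ≤ i → f i = i) (hle : ∀ i, f i ≤ i) {i : ℕ} (hi : i ≠ n) :
    f i ≠ n := by
  intro h
  have := hle i
  have := hge i (by omega)
  omega

theorem idem_append {n v : ℕ} {f : ℕ → ℕ} (hge : ∀ i, n ≤ i → f i = i) (hle : ∀ i, f i ≤ i) (hv : f v = v)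
    (hid : ∀ i, f (f i) = f i) (i : ℕ) :
    (if (if i = n then v else f i) = n then v else f (if i = n then v else f i)) = (if i = n then v else f i) := by
  by_cases hi : i = n
  · simp [hi, hv]
  · simp [hi, ne_of_ne hge hle hi, hid]

/-- Joining `n` to the last open block preserves validity, whether the block stays open or is closed. -/
theorem validCD {n q v r} (h : Valid n q) (hS : q.S = v :: r) (S') (hS' : S' = q.S ∨ S' = r) :
    Valid (n+1) ⟨fun i => if i = n then v else q.p i, fun i => if i = n then v else q.s i, S'⟩ := by
  have hvS : v ∈ q.S := by simp [hS]
  have hv := h.S_lt v hvS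
  have hpv := h.S_root v hvS
  have hsv := s_root h v hvS
  have hout := h.outer v hvS
  have hsort := h.sorted
  rw [hS, List.pairwise_cons] at hsort
  have hsub : ∀ w ∈ S', w ∈ q.S := by grind
  have hle : ∀ w ∈ q.S, w ≤ v := by grind
  have hS'' : S' = q.S ∨ v ∉ S' := by grind
  have hmem : ∀ w, w ∈ q.S → w = v ∨ w ∈ S' := by grind
  constructor <;> simp only
  · intro i hi; rw [if_neg (by omega)]; exact h.p_ge i (by omega)
  · intro i hi; rw [if_neg (by omega)]; exact h.s_ge i (by omega)
  · intro i; have := h.p_le i; split_ifs <;> omega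
  · intro i; have := h.s_le i; split_ifs <;> omega
  · exact idem_append h.p_ge h.p_le hpv h.p_idem
  · exact idem_append h.s_ge h.s_le hsv h.s_idem
  · exact nc_append h.p_ge h.p_le hpv hv h.p_nc hout
  · refine nc_append h.s_ge h.s_le hsv hv h.s_nc ?_
    intro i j hi hj hij
    apply hout i j hi hj
    rw [← h.ref i, hij, h.ref]
  · intro i; have := h.ref i; have := h.s_le i; have := h.s_ge i; grind
  · rcases hS' with rfl | rfl
    · exact h.sorted
    · exact hsort.2
  · intro w hw; have := h.S_lt w (hsub w hw); omega
  · intro w hw; have := h.S_lt w (hsub w hw); rw [if_neg (by omega)]; exact h.S_root w (hsub w hw)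
  · intro w hw i j hi hj
    have h1 := hle w (hsub w hw)
    have h2 := h.outer w (hsub w hw) i j hi hj
    have h3 := h.p_le i
    rw [if_neg (by omega)]
    split_ifs <;> omega
  · intro j hj h1 h2
    have h3 := h2 n
    rcases eq_or_ne j n with rfl | hjn
    · simp
    · simp only [hjn, if_false, if_true] at h1 h2 h3 ⊢
      have hpj : q.p j ≠ v := fun e => by have := h3 e.symm; omega
      refine h.closed j (by omega) (fun e => ?_) fun k hk => ?_
      · rcases hmem _ e with e | e
        · exact hpj e
        · exact h1 e
      · refine h2 k ?_
        rw [if_neg]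
        · exact hk
        · rintro rfl; rw [h.p_ge k le_rfl] at hk
          exact ne_of_ne h.p_ge h.p_le hjn hk.symm
  · intro i hi h1 h2
    have h3 := h2 n
    rcases eq_or_ne i n with rfl | hin
    · simp at h1; omega
    · simp only [hin, if_false, if_true] at h1 h2 h3 ⊢
      have hiv : i ≠ v := fun e => hin (h3 e.symm).symm
      obtain ⟨h4, h5⟩ := h.sing i (by omega) h1 fun j hj => by
        refine h2 j ?_
        rw [if_neg]
        · exact hj
        · rintro rfl; rw [h.s_ge j le_rfl] at hj; omega
      refine ⟨h4, h5.imp (fun e => (hmem i e).resolve_left hiv) fun h5 j hj => ?_⟩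
      split_ifs at hj
      · omega
      · exact h5 j hj

theorem validE {n q v u r} (h : Valid n q) (hS : q.S = v :: u :: r) :
    Valid (n+1) (chE n v u q r) := by
  have hvS : v ∈ q.S := by simp [hS]
  have hv := h.S_lt v hvS
  have hpv := h.S_root v hvS
  have hsv := s_root h v hvS
  have hout := h.outer v hvS
  have huS : u ∈ q.S := by simp [hS]
  have hpu := h.S_root u huS
  have hsu := s_root h u huS
  have houtu := h.outer u huS
  have hsort := h.sorted
  rw [hS, List.pairwise_cons, List.pairwise_cons] at hsort
  have huv : u < v := hsort.1 u (by simp)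
  have hsub : ∀ w ∈ u :: r, w ∈ q.S := by grind
  have hle : ∀ w ∈ u :: r, w ≤ u := by grind
  have hmem : ∀ w, w ∈ q.S → w = v ∨ w ∈ u :: r := by grind
  constructor <;> simp only [chE]
  · intro i hi; have := h.p_ge i (by omega); rw [if_neg (by omega)]; exact this
  · intro i hi; rw [if_neg (by omega)]; exact h.s_ge i (by omega)
  · intro i; have := h.p_le i; split_ifs <;> omega
  · intro i; have := h.s_le i; split_ifs <;> omega
  · intro i
    by_cases hi : i = n ∨ q.p i = v
    · simp [hi, hpu, huv.ne]
    · have := ne_of_ne h.p_ge h.p_le (i := i) (by tauto)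
      simp [hi, h.p_idem]; tauto
  · exact idem_append h.s_ge h.s_le hsv h.s_idem
  · intro i j k l hij hjk hkl
    by_cases hl : l ≤ n
    · have h1 : j ≠ n := by omega
      have h2 : i ≠ n := by omega
      have h3 : k ≠ n := by omega
      simp only [h1, h2, h3, false_or]
      have cov : ∀ x ∈ q.S, q.p j = x → q.p i = q.p k → q.p i = x := by
        intro x hx hj hik
        have := h.p_le j
        have hx' := h.S_root x hx
        rcases lt_trichotomy i x with hix | rfl | hix
        · exact absurd hik (h.outer x hx i k hix (by omega))
        · exact hx'
        · have := h.p_nc x i j k hix hij hjk (by omega) hik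
          omega
      have c1 := cov v hvS
      have c2 := cov u huS
      have hi := h.p_le i
      have hk := h.p_le k
      have hj := h.p_le j
      have hnc := h.p_nc i j k l hij hjk hkl
      have ho1 := hout j l
      have ho2 := hout u k
      have ho3 := h.p_nc v j k l
      have hjv : j = v → q.p j = v := fun e => e ▸ hpv
      clear hsub hle hmem hsort hS h cov
      intro ha hb
      by_cases e1 : q.p i = v <;> by_cases e2 : q.p k = v <;> by_cases e3 : q.p j = v <;>
        simp only [e1, e2, e3, if_true, if_false] at ha hb ⊢ <;>
        by_cases e4 : l = n ∨ q.p l = v <;> simp only [e4, if_true, if_false] at hb ⊢ <;> try omega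
    · have h1 : j ≠ l := by omega
      have h2 := h.p_ge l (by omega)
      have h3 := h.p_le j
      simp only [h2]
      split_ifs <;> omega
  · refine nc_append h.s_ge h.s_le hsv hv h.s_nc ?_
    intro i j hi hj hij
    apply hout i j hi hj
    rw [← h.ref i, hij, h.ref]
  · intro i; have := h.ref i; have := h.s_le i; have := h.s_ge i; grind
  · rw [List.pairwise_cons]; exact hsort.2
  · intro w hw; have := h.S_lt w (hsub w hw); omega
  · intro w hw; have := h.S_lt w (hsub w hw); have := h.S_root w (hsub w hw); have := hle w hw; rw [if_neg (by omega)]; omega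
  · intro w hw i j hi hj
    have h1 := hle w hw
    have h2 := h.outer w (hsub w hw) i j hi hj
    have h3 := h.p_le i
    rw [if_neg (by omega)]
    split_ifs <;> omega
  · intro j hj h1 h2
    have h3 := h2 n
    simp only [true_or, if_true] at h3
    by_cases hc : j = n ∨ q.p j = v
    · simp [hc] at h1
    · simp only [if_neg hc] at h1 h2 h3 ⊢
      rw [not_or] at hc
      rw [if_neg hc.1]
      refine h.closed j (by omega) (fun e => ?_) fun k hk => ?_
      · exact (hmem _ e).elim hc.2 h1
      · refine h2 k ?_
        rw [if_neg]
        · exact hk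
        · rintro (rfl | e)
          · rw [h.p_ge k le_rfl] at hk
            exact ne_of_ne h.p_ge h.p_le hc.1 hk.symm
          · omega
  · intro i hi h1 h2
    have h3 := h2 n
    rcases eq_or_ne i n with rfl | hin
    · simp at h1; omega
    · simp only [hin, if_false, if_true, false_or] at h1 h2 h3 ⊢
      have hiv : i ≠ v := fun e => hin (h3 e.symm).symm
      obtain ⟨h4, h5⟩ := h.sing i (by omega) h1 fun j hj => by
        refine h2 j ?_
        rw [if_neg]
        · exact hj
        · rintro rfl; rw [h.s_ge j le_rfl] at hj; omega
      rw [if_neg (by omega)]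
      refine ⟨h4, ?_⟩
      by_cases hiS : i ∈ q.S
      · exact Or.inl ((hmem i hiS).resolve_left hiv)
      right
      intro j hj
      split_ifs at hj
      · exact absurd huS (hj ▸ hiS)
      · exact h5.resolve_left hiS j hj

theorem validChC {n q v r} (h : Valid n q) (hS : q.S = v :: r) : Valid (n+1) (chC n v q) :=
  validCD h hS _ (Or.inl rfl)
theorem validChD {n q v r} (h : Valid n q) (hS : q.S = v :: r) : Valid (n+1) (chD n v q r) :=
  validCD h hS _ (Or.inr rfl)

/-! ### Every state has exactly one parent -/

theorem mem_children {n q q'} : q' ∈ children n q ↔ q' = chA n q ∨ q' = chB q ∨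
    (∃ v r, q.S = v :: r ∧ (q' = chC n v q ∨ q' = chD n v q r)) ∨
    ∃ v u r, q.S = v :: u :: r ∧ q' = chE n v u q r := by
  unfold children
  split <;> rename_i h <;> simp only [h, Finset.mem_insert, Finset.mem_singleton] <;> constructor
  · tauto
  · rintro (h | h | ⟨v, r, h, -⟩ | ⟨v, u, r, h, -⟩)
    · tauto
    · tauto
    · simp at h
    · simp at h
  · rintro (h | h | h | h)
    · tauto
    · tauto
    · exact Or.inr (Or.inr (Or.inl ⟨_, _, rfl, Or.inl h⟩))
    · exact Or.inr (Or.inr (Or.inl ⟨_, _, rfl, Or.inr h⟩))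
  · rintro (h | h | ⟨v, r, h, h'⟩ | ⟨v, u, r, h, -⟩)
    · tauto
    · tauto
    · simp only [List.cons.injEq] at h; obtain ⟨rfl, rfl⟩ := h; tauto
    · simp at h
  · rintro (h | h | h | h | h)
    · tauto
    · tauto
    · exact Or.inr (Or.inr (Or.inl ⟨_, _, rfl, Or.inl h⟩))
    · exact Or.inr (Or.inr (Or.inl ⟨_, _, rfl, Or.inr h⟩))
    · exact Or.inr (Or.inr (Or.inr ⟨_, _, _, rfl, h⟩))
  · rintro (h | h | ⟨v, r, h, h'⟩ | ⟨v, u, r, h, h'⟩)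
    · tauto
    · tauto
    · simp only [List.cons.injEq] at h; obtain ⟨rfl, rfl⟩ := h; tauto
    · simp only [List.cons.injEq] at h; obtain ⟨rfl, rfl, rfl⟩ := h; tauto

theorem upd_self {n : ℕ} {f : ℕ → ℕ} (h : f n = n) : (fun i => if i = n then n else f i) = f := by
  funext i; split_ifs with hi
  · rw [hi, h]
  · rfl

theorem upd_upd {n v : ℕ} {f : ℕ → ℕ} (h : f n = n) :
    (fun i => if i = n then n else if i = n then v else f i) = f := by
  funext i; split_ifs with hi
  · rw [hi, h]
  · rfl

/-- `parent` is a left inverse of every extension, so distinct states have disjoint sets of children. -/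
theorem valid_of_child {n q q'} (h : Valid n q) (hc : q' ∈ children n q) :
    Valid (n+1) q' ∧ parent n q' = q := by
  have hp := h.p_ge n le_rfl
  have hs := h.s_ge n le_rfl
  rw [mem_children] at hc
  rcases hc with rfl | hB | ⟨v, r, hS, rfl | rfl⟩ | ⟨v, u, r, hS, rfl⟩
  · refine ⟨validA h, ?_⟩
    simp only [parent, chA, hp, true_or, if_true, upd_self, hs, List.mem_cons, List.tail_cons]
  · rw [hB]
    refine ⟨validB h, ?_⟩
    have : n ∉ q.S := fun e => by have := h.S_lt n e; omega
    simp [parent, chB, hp, upd_self, hs, this]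
  · refine ⟨validChC h hS, ?_⟩
    have hv := h.S_lt v (by simp [hS])
    have hvS : v ∈ q.S := by simp [hS]
    simp [parent, chC, hv.ne, upd_upd, hs, hp, hvS]
  · refine ⟨validChD h hS, ?_⟩
    have hv := h.S_lt v (by simp [hS])
    have hs' := h.sorted
    rw [hS, List.pairwise_cons] at hs'
    have hvS : v ∉ r := fun e => by have := hs'.1 v e; omega
    simp [parent, chD, hv.ne, upd_upd, hs, hp, hvS, ← hS]
  · refine ⟨validE h hS, ?_⟩
    have hv := h.S_lt v (by simp [hS])
    have hu := h.S_lt u (by simp [hS])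
    have hs' := h.sorted
    rw [hS, List.pairwise_cons] at hs'
    have huv := hs'.1 u (by simp)
    have hout := h.outer v (by simp [hS])
    have hpv := h.S_root v (by simp [hS])
    simp only [parent, chE, true_or, if_true, hu.ne, if_false, huv.ne, or_self, upd_upd hs, false_and,
      ← hS]
    have : (fun i => if i = n then n else if (if i = n ∨ q.p i = v then u else q.p i) = u ∧ v ≤ i then v
        else if i = n ∨ q.p i = v then u else q.p i) = q.p := by
      funext i
      by_cases hi : i = n
      · simp [hi, hp]
      · simp only [hi, if_false, false_or]
        by_cases hiv : q.p i = v
        · have := h.p_le i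
          simp [hiv]; omega
        · simp only [hiv, if_false, ite_eq_right_iff, and_imp]
          intro h1 h2
          exfalso
          rcases h2.lt_or_eq with h3 | rfl
          · have := hout u i huv h3
            rw [h.S_root u (by simp [hS])] at this
            omega
          · exact hiv hpv
    rw [this]

/-- No open block starts after the start of the block of the last point, as it would be covered by
that block. -/
theorem head_max {n q} (h : Valid (n+1) q) : ∀ w ∈ q.S, w ≤ q.p n := by
  intro w hw
  by_contra hlt
  have h1 := h.S_lt w hw
  rcases Nat.lt_succ_iff_lt_or_eq.1 h1 with h2 | rfl
  · exact h.outer w hw (q.p n) n (by omega) h2 (h.p_idem n)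
  · have := h.S_root w hw
    omega

theorem head_eq {n q} (h : Valid (n+1) q) (hS : q.p n ∈ q.S) : ∃ r, q.S = q.p n :: r := by
  have h1 := head_max h
  have h2 := h.sorted
  cases hq : q.S with
  | nil => rw [hq] at hS; simp at hS
  | cons x r =>
    rw [hq] at h1 h2 hS
    rw [List.pairwise_cons] at h2
    have := h1 x (by simp)
    rcases List.mem_cons.1 hS with e | e
    · exact ⟨r, by rw [← e]⟩
    · have := h2.1 _ e; omega

/-- The case where the last point is a singleton of `π`. -/
theorem parent_AB {n q} (h : Valid (n+1) q) (hp : q.p n = n) :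
    Valid n (parent n q) ∧ q ∈ children n (parent n q) := by
  have hs : q.s n = n := by
    have h1 := h.ref n
    have h2 := h.p_le (q.s n)
    have h3 := h.s_le n
    omega
  have hpar : parent n q = ⟨q.p, q.s, if n ∈ q.S then q.S.tail else q.S⟩ := by
    simp [parent, hp, hs, upd_self]
  obtain ⟨S', hS', hS'' , hn⟩ : ∃ S', (if n ∈ q.S then q.S.tail else q.S) = S' ∧
      (q.S = n :: S' ∨ q.S = S') ∧ n ∉ S' := by
    by_cases hnS : n ∈ q.S
    · obtain ⟨r, hr⟩ := head_eq h (by rwa [hp])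
      have h2 := h.sorted
      rw [hr, List.pairwise_cons, hp] at h2
      rw [hp] at hr
      refine ⟨r, by simp [hr], Or.inl hr, fun e => ?_⟩
      have := h2.1 n e
      omega
    · exact ⟨q.S, by simp [hnS], Or.inr rfl, hnS⟩
  rw [hpar, hS']
  have hsub : ∀ w ∈ S', w ∈ q.S := by
    intro w hw
    rcases hS'' with e | e <;> rw [e] <;> simp [hw]
  have hmem : ∀ w ∈ q.S, w = n ∨ w ∈ S' := by
    intro w hw
    rcases hS'' with e | e <;> rw [e] at hw
    · simpa using hw
    · exact Or.inr hw
  refine ⟨?_, ?_⟩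
  · constructor <;> simp only
    · intro i hi
      rcases hi.eq_or_lt with rfl | h'
      exacts [hp, h.p_ge i h']
    · intro i hi
      rcases hi.eq_or_lt with rfl | h'
      exacts [hs, h.s_ge i h']
    · exact h.p_le
    · exact h.s_le
    · exact h.p_idem
    · exact h.s_idem
    · exact h.p_nc
    · exact h.s_nc
    · exact h.ref
    · have := h.sorted
      rcases hS'' with e | e <;> rw [e] at this
      · exact this.of_cons
      · exact this
    · intro v hv
      have := h.S_lt v (hsub v hv)
      have : v ≠ n := fun e => hn (e ▸ hv)
      omega
    · exact fun v hv => h.S_root v (hsub v hv)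
    · exact fun v hv => h.outer v (hsub v hv)
    · intro j hj h1 h2
      refine h.closed j (by omega) (fun e => ?_) h2
      have := h.p_le j
      rcases hmem _ e with e | e
      · omega
      · exact h1 e
    · intro i hi h1 h2
      obtain ⟨h3, h4⟩ := h.sing i (by omega) h1 h2
      exact ⟨h3, h4.imp (fun e => (hmem i e).resolve_left hi.ne) id⟩
  · rw [mem_children]
    rcases hS'' with e | e
    · left; simp [chA, ← e]
    · right; left; simp [chB, ← e]

/-- The case where the last point is not a singleton of `π` and lies in the same `σ`-block as the
minimum of its `π`-block. -/
theorem parent_CD {n q} (h : Valid (n+1) q) (hp : q.p n ≠ n) (hps : q.p n = q.s n) :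
    Valid n (parent n q) ∧ q ∈ children n (parent n q) := by
  obtain ⟨v, hv⟩ : ∃ v, q.p n = v := ⟨_, rfl⟩
  have hsv : q.s n = v := by rw [← hps, hv]
  have hvn : v < n := by have := h.p_le n; omega
  have hpar : parent n q = ⟨fun i => if i = n then n else q.p i, fun i => if i = n then n else q.s i,
      if v ∈ q.S then q.S else v :: q.S⟩ := by
    simp [parent, hv, hsv, hvn.ne]
  have hpv : q.p v = v := by rw [← hv, h.p_idem]
  have hsv' : q.s v = v := by rw [← hsv, h.s_idem]
  obtain ⟨S', hS', r, hr, hq⟩ : ∃ S', (if v ∈ q.S then q.S else v :: q.S) = S' ∧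
      ∃ r, S' = v :: r ∧ (q.S = S' ∨ q.S = r) := by
    by_cases hnS : v ∈ q.S
    · obtain ⟨r, hr⟩ := head_eq h (by rwa [hv])
      exact ⟨q.S, by simp [hnS], r, by rw [hr, hv], Or.inl rfl⟩
    · exact ⟨v :: q.S, by simp [hnS], q.S, rfl, Or.inr rfl⟩
  have hsub : ∀ w ∈ S', w = v ∨ w ∈ q.S := by
    intro w hw
    rcases hq with e | e
    · rw [e]; exact Or.inr hw
    · rw [hr, ← e] at hw; simpa using hw
  have hsup : ∀ w ∈ q.S, w ∈ S' := by
    intro w hw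
    rcases hq with e | e
    · rwa [← e]
    · rw [hr, ← e]; simp [hw]
  have hle := head_max h
  rw [hv] at hle
  have hpne : ∀ i, i ≠ n → q.p i ≠ n := by
    intro i hi e
    have h1 := h.p_idem i
    rw [e, hv] at h1; omega
  have hsne : ∀ i, i ≠ n → q.s i ≠ n := by
    intro i hi e
    have h1 := h.s_idem i
    rw [e, hsv] at h1; omega
  have hnc : ∀ (f : ℕ → ℕ) (_ : f n = v) (_ : ∀ i, i ≠ n → f i ≠ n) (_ : ∀ i, f i ≤ i)  (_ : ∀ i, n+1 ≤ i → f i = i)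
      (_ : ∀ i j k l, i < j → j < k → k < l → f i = f k → f j = f l → f i = f j) i j k l,
      i < j → j < k → k < l → (if i = n then n else f i) = (if k = n then n else f k) →
      (if j = n then n else f j) = (if l = n then n else f l) →
      (if i = n then n else f i) = (if j = n then n else f j) := by
    intro f hf hne hle hge hnc i j k l hij hjk hkl
    have := hnc i j k l hij hjk hkl
    have h1 := hne i
    have h2 := hne j
    have h3 := hle i
    have h4 := hle j
    have h5 := hge l
    split_ifs <;> omega
  rw [hpar, hS']
  refine ⟨?_, ?_⟩
  · constructor <;> simp only
    · intro i hi
      split_ifs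
      · omega
      · exact h.p_ge i (by omega)
    · intro i hi
      split_ifs
      · omega
      · exact h.s_ge i (by omega)
    · intro i; have := h.p_le i; split_ifs <;> omega
    · intro i; have := h.s_le i; split_ifs <;> omega
    · intro i
      by_cases hi : i = n
      · simp [hi]
      · simp [hi, hpne i hi, h.p_idem]
    · intro i
      by_cases hi : i = n
      · simp [hi]
      · simp [hi, hsne i hi, h.s_idem]
    · exact hnc q.p hv hpne h.p_le h.p_ge h.p_nc
    · exact hnc q.s hsv hsne h.s_le h.s_ge h.s_nc
    · intro i
      by_cases hi : i = n
      · simp [hi]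
      · simp [hi, hsne i hi, h.ref]
    · rcases hq with e | e
      · rw [← e]; exact h.sorted
      · by_cases hvS : v ∈ q.S
        · rw [if_pos hvS] at hS'
          rw [← hS']; exact h.sorted
        · rw [hr, ← e, List.pairwise_cons]
          refine ⟨fun w hw => ?_, h.sorted⟩
          have := hle w hw
          have : w ≠ v := fun e => hvS (e ▸ hw)
          omega
    · intro w hw
      rcases hsub w hw with e | e
      · omega
      · have := hle w e; omega
    · intro w hw
      rcases hsub w hw with rfl | e
      · rw [if_neg (by omega), hpv]
      · have := hle w e; rw [if_neg (by omega), h.S_root w e]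
    · intro w hw i j hi hj
      have hi' : i ≠ n := by
        rcases hsub w hw with rfl | e
        · omega
        · have := hle w e; omega
      rw [if_neg hi']
      split_ifs with hjn
      · exact hpne i hi'
      rcases hsub w hw with rfl | e
      · intro e
        have h3 := h.p_le i
        by_cases hjn' : j < n
        · have := h.p_nc i w j n hi hj hjn' e (by rw [hpv, hv])
          omega
        · have := h.p_ge j (by omega)
          omega
      · exact h.outer w e i j hi hj
    · intro j hj h1 h2
      rw [if_neg hj.ne] at *
      rw [if_neg hj.ne]
      refine h.closed j (by omega) (fun e => h1 (hsup _ e)) fun k hk => ?_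
      by_cases hkn : k = n
      · rw [hkn, hv] at hk
        exfalso; rw [← hk, hr] at h1
        simp at h1
      · refine h2 k ?_
        rw [if_neg hkn, hk]
    · intro i hi h1 h2
      rw [if_neg hi.ne] at *
      by_cases hiv : i = v
      · subst hiv
        exact ⟨hpv, Or.inl (by simp [hr])⟩
      obtain ⟨h3, h4⟩ := h.sing i (by omega) h1 fun j hj => by
        by_cases hjn : j = n
        · rw [hjn, hsv] at hj; omega
        · exact h2 j (by rw [if_neg hjn, hj])
      refine ⟨h3, h4.imp (hsup i) fun h5 j hj => ?_⟩
      split_ifs at hj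
      · omega
      · exact h5 j hj
  · rw [mem_children]
    right; right; left
    refine ⟨v, r, hr, ?_⟩
    have e1 : (fun i => if i = n then v else if i = n then n else q.p i) = q.p := by
      funext i; split_ifs with hi
      · rw [hi, hv]
      · rfl
    have e2 : (fun i => if i = n then v else if i = n then n else q.s i) = q.s := by
      funext i; split_ifs with hi
      · rw [hi, hsv]
      · rfl
    rcases hq with e | e
    · left; simp only [chC, e1, e2, ← e]
    · right; simp only [chD, e1, e2, ← e]

/-- The remaining case. The block of the last point must be open by `Valid.closed`, and `q.s n < n`
by `Valid.sing`, so cutting the block at `q.s n` gives two open blocks. -/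
theorem parent_E {n q} (h : Valid (n+1) q) (hp : q.p n ≠ n) (hps : q.p n ≠ q.s n) :
    Valid n (parent n q) ∧ q ∈ children n (parent n q) := by
  obtain ⟨u, hu⟩ : ∃ u, q.p n = u := ⟨_, rfl⟩
  obtain ⟨v, hv⟩ : ∃ v, q.s n = v := ⟨_, rfl⟩
  rw [hu] at hp
  rw [hu, hv] at hps
  have hpu : q.p u = u := by rw [← hu, h.p_idem]
  have hsv : q.s v = v := by rw [← hv, h.s_idem]
  have hpv : q.p v = u := by rw [← hv, h.ref, hu]
  have huv : u < v := by have := h.p_le v; omega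
  have hvn : v < n := by
    have h1 := h.s_le n
    have : v ≠ n := by
      rintro rfl
      refine hp (hu.symm.trans (h.sing v (by omega) hv fun j hj => ?_).1)
      by_contra hne
      have h2 := h.s_le j
      have h3 := h.s_ge j (by omega)
      omega
    omega
  have huS : u ∈ q.S := by
    by_contra huS
    apply hps
    rw [← hu, ← hv]
    refine (h.closed n (by omega) (by rwa [hu]) fun k hk => ?_).symm
    by_contra hlt
    have := h.p_ge k (by omega)
    have := h.p_le n
    omega
  obtain ⟨r, hr⟩ := head_eq h (by rwa [hu])
  rw [hu] at hr
  have hle := head_max h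
  rw [hu] at hle
  have hpar : parent n q = ⟨fun i => if i = n then n else if q.p i = u ∧ v ≤ i then v else q.p i,
      fun i => if i = n then n else q.s i, v :: q.S⟩ := by
    simp [parent, hu, hv, hp, hps]
  have hpne : ∀ i, i ≠ n → q.p i ≠ n := by
    intro i hi e
    have h1 := h.p_idem i
    rw [e, hu] at h1; omega
  have hsne : ∀ i, i ≠ n → q.s i ≠ n := by
    intro i hi e
    have h1 := h.s_idem i
    rw [e, hv] at h1; omega
  have hsref : ∀ i, i ≠ n → q.p i = u → (v ≤ q.s i ↔ v ≤ i) := by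
    intro i hi hpi
    have h1 := h.s_le i
    refine ⟨fun h2 => by omega, fun h2 => ?_⟩
    by_contra h3
    rcases h2.eq_or_lt with rfl | h4
    · omega
    · have hin : i < n := by
        by_contra
        have := h.p_ge i (by omega)
        omega
      have := h.s_nc (q.s i) v i n (by omega) h4 hin (h.s_idem i) (by rw [hsv, hv])
      rw [h.s_idem] at this
      omega
  rw [hpar]
  refine ⟨?_, ?_⟩
  · constructor <;> simp only
    · intro i hi
      split_ifs with h1 h2
      · omega
      · have := h.p_ge i (by omega)
        omega
      · exact h.p_ge i (by omega)
    · intro i hi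
      split_ifs
      · omega
      · exact h.s_ge i (by omega)
    · intro i; have := h.p_le i; split_ifs <;> omega
    · intro i; have := h.s_le i; split_ifs <;> omega
    · intro i
      by_cases hi : i = n
      · simp [hi]
      · by_cases hc : q.p i = u ∧ v ≤ i
        · simp [hi, hc, hvn.ne, hpv]
        · simp only [hi, if_false, hc, hpne i hi, h.p_idem]
          rw [if_neg]
          rintro ⟨h1, h2⟩
          omega
    · intro i
      by_cases hi : i = n
      · simp [hi]
      · simp [hi, hsne i hi, h.s_idem]
    · intro i j k l hij hjk hkl
      by_cases hl : n ≤ l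
      · have h1 : (if l = n then n else if q.p l = u ∧ v ≤ l then v else q.p l) = l := by
          have := h.p_ge l
          split_ifs <;> omega
        rw [h1]
        have := h.p_le j
        split_ifs <;> omega
      · have h1 := h.p_nc i j k l hij hjk hkl
        simp only [show i ≠ n by omega, show j ≠ n by omega, show k ≠ n by omega, show l ≠ n by omega, if_false]
        intro ha hb
        have hpi := h.p_le i
        have hpj := h.p_le j
        have hnv : ∀ i, q.p i ≠ v := fun i e => by
          have := h.p_idem i
          rw [e, hpv] at this
          omega
        have hvi := hnv i
        have hvj := hnv j
        have hvk := hnv k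
        have hvl := hnv l
        split_ifs at ha hb ⊢ <;> omega
    · intro i j k l hij hjk hkl
      have := h.s_nc i j k l hij hjk hkl
      have h1 := hsne i
      have h2 := hsne j
      have h3 := h.s_le i
      have h4 := h.s_le j
      have h5 := h.s_ge l
      split_ifs <;> omega
    · intro i
      by_cases hi : i = n
      · simp [hi]
      · simp only [hi, if_false, hsne i hi, h.ref]
        by_cases hc : q.p i = u
        · simp only [hc, true_and, hsref i hi hc]
        · simp [hc]
    · rw [List.pairwise_cons]
      exact ⟨fun w hw => by have := hle w hw; omega, h.sorted⟩
    · intro w hw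
      rcases List.mem_cons.1 hw with e | e
      · omega
      · have := hle w e; omega
    · intro w hw
      rcases List.mem_cons.1 hw with rfl | e
      · rw [if_neg (by omega)]; simp [hpv]
      · have := hle w e; rw [if_neg (by omega), if_neg (by omega), h.S_root w e]
    · intro w hw i j hi hj
      have hw' : w ≤ v := by
        rcases List.mem_cons.1 hw with rfl | e
        · omega
        · have := hle w e; omega
      rw [if_neg (show i ≠ n by omega), if_neg (show ¬ (q.p i = u ∧ v ≤ i) by omega)]
      have hpi := h.p_le i
      rcases List.mem_cons.1 hw with rfl | e
      · by_cases hjn : j < n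
        · have h1 := h.p_nc i w j n hi hj hjn
          rw [hpv, hu] at h1
          split_ifs <;> omega
        · have := h.p_ge j
          split_ifs <;> omega
      · have h1 := h.outer w e i j hi hj
        have h2 := hle w e
        split_ifs <;> omega
    · intro j hj h1 h2
      rw [if_neg hj.ne] at h1 h2
      rw [if_neg hj.ne, if_neg hj.ne]
      have hc : ¬ (q.p j = u ∧ v ≤ j) := by
        intro hc
        rw [if_pos hc] at h1
        simp at h1
      rw [if_neg hc] at h1 h2 ⊢
      have h1' : q.p j ≠ v ∧ q.p j ∉ q.S := by simpa using h1
      refine h.closed j (by omega) h1'.2 fun k hk => h2 k ?_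
      have hju : q.p j ≠ u := fun e => h1'.2 (e ▸ huS)
      rw [if_neg, if_neg, hk]
      · rw [hk]; tauto
      · rintro rfl; omega
    · intro i hi h1 h2
      rw [if_neg hi.ne] at h1 ⊢
      by_cases hiv : i = v
      · subst hiv
        exact ⟨by simp [hpv], Or.inl (by simp)⟩
      obtain ⟨h3, h4⟩ := h.sing i (by omega) h1 fun j hj => by
        by_cases hjn : j = n
        · rw [hjn, hv] at hj; omega
        · exact h2 j (by rw [if_neg hjn, hj])
      refine ⟨by rw [if_neg (by omega), h3], h4.imp (fun e => List.mem_cons_of_mem _ e) fun h5 j hj => ?_⟩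
      split_ifs at hj
      · omega
      · omega
      · exact h5 j hj
  · rw [mem_children]
    right; right; right
    refine ⟨v, u, r, by rw [hr], ?_⟩
    have e1 : (fun i => if i = n ∨ (if i = n then n else if q.p i = u ∧ v ≤ i then v else q.p i) = v then u else
        if i = n then n else if q.p i = u ∧ v ≤ i then v else q.p i) = q.p := by
      funext i
      by_cases hi : i = n
      · simp [hi, hu]
      · by_cases hc : q.p i = u ∧ v ≤ i
        · simp [hi, hc]
        · simp only [hi, hc, if_false, false_or]
          rw [if_neg]
          intro e
          have h1 := h.p_idem i
          rw [e, hpv] at h1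
          omega
    have e2 : (fun i => if i = n then v else if i = n then n else q.s i) = q.s := by
      funext i; split_ifs with hi
      · rw [hi, hv]
      · rfl
    simp only [chE, e1, e2, ← hr]

theorem parent_valid {n q} (h : Valid (n+1) q) : Valid n (parent n q) ∧ q ∈ children n (parent n q) := by
  by_cases h1 : q.p n = n
  · exact parent_AB h h1
  by_cases h2 : q.p n = q.s n
  · exact parent_CD h h1 h2
  · exact parent_E h h1 h2

/-- All valid states on `{0, …, n-1}`. -/
def T : ℕ → Finset St
  | 0 => {⟨id, id, []⟩}
  | n+1 => (T n).biUnion (children n)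

theorem mem_T {n q} : q ∈ T n ↔ Valid n q := by
  induction n generalizing q with
  | zero =>
    simp only [T, Finset.mem_singleton]
    constructor
    · rintro rfl
      constructor <;> simp <;> omega
    · intro h
      obtain ⟨p, s, S⟩ := q
      have h1 : p = id := funext fun i => h.p_ge i (by omega)
      have h2 : s = id := funext fun i => h.s_ge i (by omega)
      have h3 : S = [] := List.eq_nil_iff_forall_not_mem.2 fun v hv => by have := h.S_lt v hv; omega
      rw [h1, h2, h3]
  | succ n ih =>
    simp only [T, Finset.mem_biUnion, ih]
    constructor
    · rintro ⟨q', h, h'⟩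
      exact (valid_of_child h h').1
    · exact fun h => ⟨_, parent_valid h⟩

theorem sum_T_succ {A : Type*} [AddCommMonoid A] (n : ℕ) (f : St → A) :
    ∑ q ∈ T (n+1), f q = ∑ q ∈ T n, ∑ q' ∈ children n q, f q' := by
  rw [T, Finset.sum_biUnion]
  intro x hx y hy hxy
  rw [Function.onFun, Finset.disjoint_left]
  intro z h1 h2
  apply hxy
  rw [← (valid_of_child (mem_T.1 hx) h1).2, (valid_of_child (mem_T.1 hy) h2).2]

/-! ### Blocks and counting statistics under extension -/

/-- The class of `v` in `{0, …, n-1}`. -/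
def blk (n : ℕ) (p : ℕ → ℕ) (v : ℕ) : Finset ℕ := (range n).filter fun i => p i = v

/-- The minima of the closed blocks. -/
def clRoots (n : ℕ) (q : St) : Finset ℕ := (range n).filter fun v => q.p v = v ∧ v ∉ q.S

/-- The number of blocks of the partition with block-minimum function `f`. -/
def nroots (n : ℕ) (f : ℕ → ℕ) : ℕ := ((range n).filter fun v => f v = v).card

theorem mem_blk {n p v i} : i ∈ blk n p v ↔ i < n ∧ p i = v := by simp [blk]

theorem mem_clRoots {n q v} : v ∈ clRoots n q ↔ v < n ∧ q.p v = v ∧ v ∉ q.S := by simp [clRoots]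

theorem blk_same {n v : ℕ} {p : ℕ → ℕ} (hp : p n = n) (hv : v < n) : blk (n+1) p v = blk n p v := by
  ext i
  simp only [mem_blk]
  constructor
  · rintro ⟨h1, h2⟩
    refine ⟨?_, h2⟩
    rcases Nat.lt_succ_iff_lt_or_eq.1 h1 with h | rfl
    · exact h
    · omega
  · rintro ⟨h1, h2⟩
    exact ⟨by omega, h2⟩

theorem blk_new {n : ℕ} {p : ℕ → ℕ} (hp : p n = n) (hle : ∀ i, p i ≤ i) : blk (n+1) p n = {n} := by
  ext i
  simp only [mem_blk, Finset.mem_singleton]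
  constructor
  · rintro ⟨h1, h2⟩
    have := hle i; omega
  · rintro rfl; exact ⟨by omega, hp⟩

theorem blk_join {n v : ℕ} (p : ℕ → ℕ) :
    blk (n+1) (fun i => if i = n then v else p i) v = insert n (blk n p v) := by
  ext i
  simp only [mem_blk, Finset.mem_insert]
  by_cases hi : i = n
  · simp [hi]
  · simp only [hi, if_false, false_or]
    constructor <;> rintro ⟨h1, h2⟩ <;> exact ⟨by omega, h2⟩

theorem blk_join_ne {n v w : ℕ} (p : ℕ → ℕ) (h : w ≠ v) :
    blk (n+1) (fun i => if i = n then v else p i) w = blk n p w := by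
  ext i
  simp only [mem_blk]
  by_cases hi : i = n
  · simp [hi, h.symm]
  · simp only [hi, if_false]
    constructor <;> rintro ⟨h1, h2⟩ <;> exact ⟨by omega, h2⟩

theorem blk_merge {n u v : ℕ} (p : ℕ → ℕ) :
    blk (n+1) (fun i => if i = n ∨ p i = v then u else p i) u = insert n (blk n p u ∪ blk n p v) := by
  ext i
  simp only [mem_blk, Finset.mem_insert, Finset.mem_union]
  by_cases hi : i = n
  · simp [hi]
  · by_cases hv : p i = v
    · simp [hi, hv]; omega
    · simp [hi, hv]; omega

theorem blk_merge_ne {n u v w : ℕ} (p : ℕ → ℕ) (hu : w ≠ u) (hv : w ≠ v) :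
    blk (n+1) (fun i => if i = n ∨ p i = v then u else p i) w = blk n p w := by
  ext i
  simp only [mem_blk]
  by_cases hi : i = n
  · simp [hi, hu.symm]
  · by_cases hiv : p i = v
    · simp [hiv, hu.symm, hv.symm]
    · simp [hi, hiv]; omega

theorem clRoots_lt {n q v} (h : v ∈ clRoots n q) : v < n := (mem_clRoots.1 h).1

theorem clRoots_A {n q} : clRoots (n+1) (chA n q) = clRoots n q := by
  ext i
  simp only [mem_clRoots, chA, List.mem_cons]
  constructor
  · rintro ⟨h1, h2, h3⟩
    push Not at h3
    exact ⟨by omega, h2, h3.2⟩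
  · rintro ⟨h1, h2, h3⟩
    refine ⟨by omega, h2, ?_⟩
    push Not
    exact ⟨by omega, h3⟩

theorem clRoots_B {n q} (h : Valid n q) : clRoots (n+1) (chB q) = insert n (clRoots n q) := by
  ext i
  simp only [mem_clRoots, chB, Finset.mem_insert]
  constructor
  · rintro ⟨h1, h2, h3⟩
    rcases Nat.lt_succ_iff_lt_or_eq.1 h1 with h | rfl
    · exact Or.inr ⟨h, h2, h3⟩
    · exact Or.inl rfl
  · rintro (rfl | ⟨h1, h2, h3⟩)
    · exact ⟨by omega, h.p_ge i le_rfl, fun hi => by have := h.S_lt i hi; omega⟩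
    · exact ⟨by omega, h2, h3⟩

theorem clRoots_C {n q v r} (h : Valid n q) (hS : q.S = v :: r) : clRoots (n+1) (chC n v q) = clRoots n q := by
  have hv := h.S_lt v (by simp [hS])
  ext i
  simp only [mem_clRoots, chC]
  by_cases hi : i = n
  · simp [hi, hv.ne]
  · simp only [hi, if_false]
    constructor <;> rintro ⟨h1, h2⟩ <;> exact ⟨by omega, h2⟩

theorem clRoots_D {n q v r} (h : Valid n q) (hS : q.S = v :: r) :
    clRoots (n+1) (chD n v q r) = insert v (clRoots n q) := by
  have hv := h.S_lt v (by simp [hS])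
  have hr := h.S_root v (by simp [hS])
  have hs := h.sorted
  rw [hS, List.pairwise_cons] at hs
  ext i
  simp only [mem_clRoots, chD, Finset.mem_insert, hS, List.mem_cons]
  by_cases hi : i = n
  · simp [hi, hv.ne, hv.ne']
  · by_cases hiv : i = v
    · subst hiv
      simp only [hi, if_false, true_or, iff_true]
      exact ⟨by omega, hr, fun h' => by have := hs.1 i h'; omega⟩
    · simp only [hi, if_false, hiv, false_or]
      constructor <;> rintro ⟨h1, h2⟩ <;> exact ⟨by omega, h2⟩

theorem clRoots_E {n q v u r} (h : Valid n q) (hS : q.S = v :: u :: r) :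
    clRoots (n+1) (chE n v u q r) = clRoots n q := by
  have hv := h.S_lt v (by simp [hS])
  have hu := h.S_lt u (by simp [hS])
  have hr := h.S_root v (by simp [hS])
  have hs := h.sorted
  rw [hS, List.pairwise_cons, List.pairwise_cons] at hs
  have huv := hs.1 u (by simp)
  ext i
  simp only [mem_clRoots, chE, hS, List.mem_cons]
  by_cases hi : i = n
  · simp [hi, hu.ne]
  · by_cases hiv : i = v
    · subst hiv
      simp [hr, huv.ne]
    · by_cases hp : q.p i = v
      · simp only [hi, hp, or_true, if_true]
        constructor
        · rintro ⟨h1, h2, h3⟩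
          exact absurd (Or.inl h2.symm) h3
        · rintro ⟨h1, h2, h3⟩
          exact absurd h2.symm hiv
      · simp only [hi, hp, or_false, if_false, hiv, false_or]
        constructor <;> rintro ⟨h1, h2⟩ <;> exact ⟨by omega, h2⟩

/-! The lemmas `prod_A`, …, `prod_E`, and their additive versions `sum_A`, …, `sum_E`, follow a product
over the closed blocks through each extension. Only `chB` and `chD` create a closed block. -/

@[to_additive]
theorem prod_A {A : Type*} [CommMonoid A] (F : Finset ℕ → A) {n q} (h : Valid n q) :
    ∏ w ∈ clRoots (n+1) (chA n q), F (blk (n+1) (chA n q).p w) = ∏ w ∈ clRoots n q, F (blk n q.p w) := by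
  rw [clRoots_A]
  exact Finset.prod_congr rfl fun w hw => by rw [chA, blk_same (h.p_ge n le_rfl) (clRoots_lt hw)]

@[to_additive]
theorem prod_B {A : Type*} [CommMonoid A] (F : Finset ℕ → A) {n q} (h : Valid n q) :
    ∏ w ∈ clRoots (n+1) (chB q), F (blk (n+1) (chB q).p w) = F {n} * ∏ w ∈ clRoots n q, F (blk n q.p w) := by
  rw [clRoots_B h, Finset.prod_insert (fun h' => by have := clRoots_lt h'; omega)]
  congr 1
  · rw [chB, blk_new (h.p_ge n le_rfl) h.p_le]
  · exact Finset.prod_congr rfl fun w hw => by rw [chB, blk_same (h.p_ge n le_rfl) (clRoots_lt hw)]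

/-- Minima of open blocks are not minima of closed blocks. -/
theorem ne_of_cl {n q v w} (hv : v ∈ q.S) (hw : w ∈ clRoots n q) : w ≠ v := by
  rintro rfl
  exact (mem_clRoots.1 hw).2.2 hv

@[to_additive]
theorem prod_C {A : Type*} [CommMonoid A] (F : Finset ℕ → A) {n q v r} (h : Valid n q) (hS : q.S = v :: r) :
    ∏ w ∈ clRoots (n+1) (chC n v q), F (blk (n+1) (chC n v q).p w) = ∏ w ∈ clRoots n q, F (blk n q.p w) := by
  rw [clRoots_C h hS]
  exact Finset.prod_congr rfl fun w hw => by rw [chC, blk_join_ne _ (ne_of_cl (by simp [hS]) hw)]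

@[to_additive]
theorem prod_D {A : Type*} [CommMonoid A] (F : Finset ℕ → A) {n q v r} (h : Valid n q) (hS : q.S = v :: r) :
    ∏ w ∈ clRoots (n+1) (chD n v q r), F (blk (n+1) (chD n v q r).p w) =
      F (insert n (blk n q.p v)) * ∏ w ∈ clRoots n q, F (blk n q.p w) := by
  rw [clRoots_D h hS, Finset.prod_insert (fun h' => ne_of_cl (by simp [hS]) h' rfl)]
  congr 1
  · rw [chD, blk_join]
  · exact Finset.prod_congr rfl fun w hw => by rw [chD, blk_join_ne _ (ne_of_cl (by simp [hS]) hw)]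

@[to_additive]
theorem prod_E {A : Type*} [CommMonoid A] (F : Finset ℕ → A) {n q v u r} (h : Valid n q) (hS : q.S = v :: u :: r) :
    ∏ w ∈ clRoots (n+1) (chE n v u q r), F (blk (n+1) (chE n v u q r).p w) = ∏ w ∈ clRoots n q, F (blk n q.p w) := by
  rw [clRoots_E h hS]
  exact Finset.prod_congr rfl fun w hw => by
    rw [chE, blk_merge_ne _ (ne_of_cl (by simp [hS]) hw) (ne_of_cl (by simp [hS]) hw)]

theorem nroots_new {n} {f : ℕ → ℕ} (h : f n = n) : nroots (n+1) f = nroots n f + 1 := by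
  rw [nroots, Finset.range_add_one, Finset.filter_insert, if_pos h, Finset.card_insert_of_notMem (by simp), nroots]

theorem nroots_join {n v} {f : ℕ → ℕ} (h : v ≠ n) : nroots (n+1) (fun i => if i = n then v else f i) = nroots n f := by
  rw [nroots, Finset.range_add_one, Finset.filter_insert, if_neg (by simpa using h), nroots]
  congr 1
  refine Finset.filter_congr fun i hi => ?_
  have := Finset.mem_range.1 hi
  rw [if_neg (by omega)]

theorem nroots_merge {n u v} {f : ℕ → ℕ} (hu : u < v) (hv : v < n) (hf : f v = v) (hfu : f u = u) :
    nroots (n+1) (fun i => if i = n ∨ f i = v then u else f i) + 1 = nroots n f := by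
  rw [nroots, nroots, ← Finset.card_erase_add_one (a := v) (s := (range n).filter fun i => f i = i) (by simp [hf, hv])]
  congr 2
  ext i
  simp only [Finset.mem_filter, Finset.mem_range, Finset.mem_erase]
  by_cases hiu : i = u
  · subst hiu; split_ifs with h <;> omega
  · split_ifs with h <;> omega

/-- The number of closed singleton blocks. -/
def nsing (n : ℕ) (q : St) : ℕ := ∑ v ∈ clRoots n q, if (blk n q.p v).card = 1 then 1 else 0

theorem nsing_D {n q v r} (h : Valid n q) (hS : q.S = v :: r) : nsing (n+1) (chD n v q r) = nsing n q := by
  rw [nsing, nsing, sum_D (fun B => if B.card = 1 then 1 else 0) h hS, if_neg, zero_add]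
  have hv := h.S_lt v (by simp [hS])
  have hr := h.S_root v (by simp [hS])
  rw [Finset.card_insert_of_notMem (by simp [mem_blk])]
  have : 0 < (blk n q.p v).card := Finset.card_pos.2 ⟨v, mem_blk.2 ⟨hv, hr⟩⟩
  omega

theorem nsing_B {n q} (h : Valid n q) : nsing (n+1) (chB q) = nsing n q + 1 := by
  rw [nsing, nsing, sum_B (fun B => if B.card = 1 then 1 else 0) h, Finset.card_singleton, if_pos rfl, add_comm]

theorem nsing_A {n q} (h : Valid n q) : nsing (n+1) (chA n q) = nsing n q :=
  sum_A (fun B => if B.card = 1 then 1 else 0) h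
theorem nsing_C {n q v r} (h : Valid n q) (hS : q.S = v :: r) : nsing (n+1) (chC n v q) = nsing n q :=
  sum_C (fun B => if B.card = 1 then 1 else 0) h hS
theorem nsing_E {n q v u r} (h : Valid n q) (hS : q.S = v :: u :: r) : nsing (n+1) (chE n v u q r) = nsing n q :=
  sum_E (fun B => if B.card = 1 then 1 else 0) h hS

/-- The exponents `n - 2|σ| + |S| + s₁` of `β` and `|σ| - |π|` of `γ` are never negative, so the
truncated subtraction of natural numbers in `Ccoef` is exact. -/
theorem count_inv {n q} (h : Valid n q) : 2 * nroots n q.s ≤ n + q.S.length + nsing n q ∧ nroots n q.p ≤ nroots n q.s := by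
  induction n generalizing q with
  | zero => simp [nroots]
  | succ n ih =>
    obtain ⟨h1, h2⟩ := parent_valid h
    obtain ⟨i1, i2⟩ := ih h1
    generalize parent n q = q0 at *
    have hp := h1.p_ge n le_rfl
    have hs := h1.s_ge n le_rfl
    rcases mem_children.1 h2 with rfl | rfl | ⟨v, r, hS, rfl | rfl⟩ | ⟨v, u, r, hS, rfl⟩
    · rw [nsing_A h1]
      simp only [chA, nroots_new hp, nroots_new hs, List.length_cons]; omega
    · have := nsing_B h1
      simp only [chB] at this
      rw [this]
      simp only [nroots_new hp, nroots_new hs]; omega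
    · have hv := h1.S_lt v (by simp [hS])
      rw [nsing_C h1 hS]
      simp only [chC, nroots_join hv.ne]; omega
    · have hv := h1.S_lt v (by simp [hS])
      rw [nsing_D h1 hS]
      simp only [hS, List.length_cons] at i1
      simp only [chD, nroots_join hv.ne]; omega
    · have hv := h1.S_lt v (by simp [hS])
      have hr := h1.S_root v (by simp [hS])
      have hs := h1.sorted
      rw [hS, List.pairwise_cons] at hs
      have huv := hs.1 u (by simp)
      rw [nsing_E h1 hS]
      have := nroots_merge huv hv hr (h1.S_root u (by simp [hS]))
      simp only [hS, List.length_cons] at i1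
      simp only [chE, nroots_join hv.ne, List.length_cons]; omega

/-! ### Ordered products over blocks -/

/-- The product of the `a i`, `i ∈ B`, in increasing order of `i`. -/
def aP {M : Type*} [Ring M] (a : ℕ → M) (B : Finset ℕ) : M := ((B.sort (· ≤ ·)).map a).prod

theorem aP_union {M : Type*} [Ring M] (a : ℕ → M) {B C : Finset ℕ} (h : ∀ b ∈ B, ∀ c ∈ C, b < c) :
    aP a (B ∪ C) = aP a B * aP a C := by
  have : (B ∪ C).sort (· ≤ ·) = B.sort (· ≤ ·) ++ C.sort (· ≤ ·) := by
    have hd : Disjoint B C := Finset.disjoint_left.2 fun x h1 h2 => lt_irrefl _ (h x h1 x h2)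
    refine List.Perm.eq_of_pairwise (le := (· ≤ ·)) (fun a b _ _ h1 h2 => le_antisymm h1 h2) (Finset.pairwise_sort _ _) ?_ ?_
    · rw [List.pairwise_append]
      refine ⟨Finset.pairwise_sort _ _, Finset.pairwise_sort _ _, fun x hx y hy => ?_⟩
      rw [Finset.mem_sort] at hx hy
      exact (h x hx y hy).le
    · rw [← Multiset.coe_eq_coe, ← Multiset.coe_add, Finset.sort_eq, Finset.sort_eq, Finset.sort_eq,
        ← Finset.disjUnion_eq_union _ _ hd]
      rfl
  rw [aP, this, List.map_append, List.prod_append, aP, aP]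

theorem aP_singleton {M : Type*} [Ring M] (a : ℕ → M) (n : ℕ) : aP a {n} = a n := by
  simp [aP]

theorem aP_insert {M : Type*} [Ring M] (a : ℕ → M) {B : Finset ℕ} {n : ℕ} (h : ∀ b ∈ B, b < n) :
    aP a (insert n B) = aP a B * a n := by
  rw [Finset.insert_eq, Finset.union_comm, aP_union a (by simpa using h), aP_singleton]

/-! ### The recursion for `W` in list form -/

/-- `W` applied to the reverse of the list `L`. With the last argument at the head, the recursion
for `W` acts on the front of the list, as the extensions of a state act on its list of open blocks. -/
def Wr {M : Type*} {N : Type*} (W : (m : ℕ) → (Fin m → M) → N) (L : List M) : N :=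
  W L.length fun i => L.get i.rev

theorem init_get {M : Type*} (y : M) (L : List M) :
    (Fin.init fun i : Fin (y :: L).length => (y :: L).get i.rev) = fun i : Fin L.length => L.get i.rev := by
  funext i
  simp only [Fin.init]
  rw [Fin.rev_castSucc]
  rfl

theorem snoc_get {M : Type*} (y : M) (L : List M) :
    (Fin.snoc (α := fun _ => M) (fun i : Fin L.length => L.get i.rev) y) =
      fun i : Fin (y :: L).length => (y :: L).get i.rev := by
  funext i
  refine Fin.lastCases ?_ (fun i => ?_) i
  · rw [Fin.snoc_last, Fin.rev_last]; rfl
  · rw [Fin.snoc_castSucc, Fin.rev_castSucc]; rfl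

theorem get_last {M : Type*} (y : M) (L : List M) :
    (y :: L).get (Fin.last L.length).rev = y := by
  rw [Fin.rev_last]; rfl

section
variable {M : Type*} [Ring M] [Algebra ℂ M] (E : M →ₗ[ℂ] ℂ) (α β t γ : ℂ)
    (W : (m : ℕ) → (Fin m → M) → TensorAlgebra ℂ M)

/-- The recursion defining `W`, with arguments listed from last to first. -/
structure WRec : Prop where
  nil : Wr W [] = 1
  one : ∀ y, Wr W [y] = TensorAlgebra.ι ℂ y - (α * E y) • 1
  two : ∀ y x, Wr W [y, x] = Wr W [x] * TensorAlgebra.ι ℂ y - (α * E y) • Wr W [x] - β • Wr W [x * y]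
    - (t * E (x * y)) • Wr W []
  more : ∀ y x w L, Wr W (y :: x :: w :: L) = Wr W (x :: w :: L) * TensorAlgebra.ι ℂ y
    - (α * E y) • Wr W (x :: w :: L) - β • Wr W (x * y :: w :: L)
    - (t * E (x * y)) • Wr W (w :: L) - γ • Wr W (w * x * y :: L)

theorem wrec_of
    (hW0 : ∀ a : Fin 0 → M, W 0 a = 1)
    (hW1 : ∀ a : Fin 1 → M,
      W 1 a = TensorAlgebra.ι ℂ (a 0) - (α * E (a 0)) • 1)
    (hW2 : ∀ a : Fin 2 → M,
      W 2 a =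
        W 1 (Fin.init a) * TensorAlgebra.ι ℂ (a 1)
          - (α * E (a 1)) • W 1 (Fin.init a)
          - β • W 1 (Fin.snoc (Fin.init (Fin.init a)) (a 0 * a 1))
          - (t * E (a 0 * a 1)) • W 0 (Fin.init (Fin.init a)))
    (hWrec : ∀ (m : ℕ) (a : Fin (m + 3) → M),
      W (m + 3) a =
        W (m + 2) (Fin.init a) * TensorAlgebra.ι ℂ (a (Fin.last (m + 2)))
          - (α * E (a (Fin.last (m + 2)))) • W (m + 2) (Fin.init a)
          - β • W (m + 2) (Fin.snoc (Fin.init (Fin.init a))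
              (a (Fin.last (m + 1)).castSucc * a (Fin.last (m + 2))))
          - (t * E (a (Fin.last (m + 1)).castSucc * a (Fin.last (m + 2)))) •
              W (m + 1) (Fin.init (Fin.init a))
          - γ • W (m + 1) (Fin.snoc (Fin.init (Fin.init (Fin.init a)))
              (a (Fin.last m).castSucc.castSucc * a (Fin.last (m + 1)).castSucc
                * a (Fin.last (m + 2))))) : WRec E α β t γ W where
  nil := hW0 _
  one y := hW1 _
  two y x := by
    have h := hW2 fun i => [y, x].get i.rev
    have e1 := init_get y [x]
    have e2 := init_get x []
    have e3 := snoc_get (x * y) []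
    simp only [List.length_cons, List.length_nil] at e1 e2 e3
    have e2' : (Fin.init fun i : Fin 1 => [x].get i.rev) = fun i : Fin 0 => [].get i.rev := e2
    have e3' : (Fin.snoc (α := fun _ => M) (fun i : Fin 0 => [].get i.rev) (x * y)) =
      fun i : Fin 1 => [x * y].get i.rev := e3
    rw [e1, e2'] at h
    have a0 : (fun i : Fin 2 => [y, x].get i.rev) 0 = x := rfl
    have a1 : (fun i : Fin 2 => [y, x].get i.rev) 1 = y := rfl
    rw [show [y,x].get (Fin.rev 0) = x from rfl, show [y,x].get (Fin.rev 1) = y from rfl, e3'] at h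
    exact h
  more y x w L := by
    have h := hWrec L.length fun i => (y :: x :: w :: L).get i.rev
    have e1 := init_get y (x :: w :: L)
    have e2 := init_get x (w :: L)
    have e3 := init_get w L
    have e4 := snoc_get (x * y) (w :: L)
    have e5 := snoc_get (w * x * y) L
    have a1 : (y :: x :: w :: L).get (Fin.last (L.length + 2)).rev = y := get_last y (x :: w :: L)
    have a2 : (y :: x :: w :: L).get (Fin.last (L.length + 1)).castSucc.rev = x := by
      rw [Fin.rev_castSucc, Fin.rev_last]; rfl
    have a3 : (y :: x :: w :: L).get (Fin.last L.length).castSucc.castSucc.rev = w := by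
      rw [Fin.rev_castSucc, Fin.rev_castSucc, Fin.rev_last]; rfl
    simp only [List.length_cons] at e1 e2 e3 e4 e5
    rw [e1, e2, e3, a1, a2, a3, e4, e5] at h
    exact h
variable {E α β t γ W}
theorem WRec.mul_nil (h : WRec E α β t γ W) (y : M) :
    Wr W [] * TensorAlgebra.ι ℂ y = Wr W [y] + (α * E y) • Wr W [] := by
  rw [h.one, h.nil, one_mul, sub_add_cancel]
theorem WRec.mul_one (h : WRec E α β t γ W) (y x : M) :
    Wr W [x] * TensorAlgebra.ι ℂ y = Wr W [y, x] + (α * E y) • Wr W [x] + β • Wr W [x * y]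
      + (t * E (x * y)) • Wr W [] := by
  rw [h.two]; abel
theorem WRec.mul_more (h : WRec E α β t γ W) (y x w : M) (L : List M) :
    Wr W (x :: w :: L) * TensorAlgebra.ι ℂ y = Wr W (y :: x :: w :: L) + (α * E y) • Wr W (x :: w :: L)
      + β • Wr W (x * y :: w :: L)
      + (t * E (x * y)) • Wr W (w :: L) + γ • Wr W (w * x * y :: L) := by
  rw [h.more]; abel
end

/-! ### Values of states -/

section
variable {M : Type*} [Ring M] (a : ℕ → M) {n : ℕ} {q : St}

/-- The products of `a` over the open blocks, the last open block first. -/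
def bl (n : ℕ) (q : St) : List M := q.S.map fun v => aP a (blk n q.p v)

theorem bl_A (h : Valid n q) : bl a (n+1) (chA n q) = a n :: bl a n q := by
  have hp := h.p_ge n le_rfl
  simp only [bl, chA, List.map_cons, blk_new hp h.p_le, aP_singleton]
  congr 1
  exact List.map_congr_left fun v hv => by rw [blk_same hp (h.S_lt v hv)]

theorem bl_B (h : Valid n q) : bl a (n+1) (chB q) = bl a n q := by
  have hp := h.p_ge n le_rfl
  exact List.map_congr_left fun v hv => by rw [chB, blk_same hp (h.S_lt v hv)]

theorem bl_C (h : Valid n q) {v r} (hS : q.S = v :: r) : bl a (n+1) (chC n v q) =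
    (aP a (blk n q.p v) * a n) :: r.map fun w => aP a (blk n q.p w) := by
  have hs := h.sorted
  rw [hS, List.pairwise_cons] at hs
  simp only [bl, chC, hS, List.map_cons, blk_join, aP_insert _ (fun b hb => (mem_blk.1 hb).1)]
  congr 1
  exact List.map_congr_left fun w hw => by rw [blk_join_ne _ (hs.1 w hw).ne]

theorem bl_D (h : Valid n q) {v r} (hS : q.S = v :: r) : bl a (n+1) (chD n v q r) =
    r.map fun w => aP a (blk n q.p w) := by
  have hs := h.sorted
  rw [hS, List.pairwise_cons] at hs
  exact List.map_congr_left fun w hw => by rw [chD, blk_join_ne _ (hs.1 w hw).ne]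

/-- An open block lies entirely to the right of every block whose minimum is smaller. -/
theorem blk_lt_blk (h : Valid n q) {u v} (huv : u < v) (hv : v ∈ q.S) (hu : q.p u = u) (i) (hi : i ∈ blk n q.p u)
    (j) (hj : j ∈ blk n q.p v) : i < j := by
  have h1 := mem_blk.1 hi
  have h2 := mem_blk.1 hj
  have hle := h.p_le j
  have := h.outer v hv u i huv
  have hr := h.S_root v hv
  by_contra hlt
  refine this ?_ (by omega)
  rcases eq_or_ne i v with rfl | hne
  · omega
  · omega

theorem bl_E (h : Valid n q) {v u r} (hS : q.S = v :: u :: r) : bl a (n+1) (chE n v u q r) =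
    (aP a (blk n q.p u) * aP a (blk n q.p v) * a n) :: r.map fun w => aP a (blk n q.p w) := by
  have hs := h.sorted
  rw [hS, List.pairwise_cons, List.pairwise_cons] at hs
  have huv := hs.1 u (by simp)
  simp only [bl, chE, List.map_cons, blk_merge]
  rw [aP_insert, aP_union]
  · congr 1
    exact List.map_congr_left fun w hw => by
      rw [blk_merge_ne _ (hs.2.1 w hw).ne (hs.1 w (by simp [hw])).ne]
  · exact blk_lt_blk h huv (by simp [hS]) (h.S_root u (by simp [hS]))
  · intro b hb
    rcases Finset.mem_union.1 hb with hb | hb <;> exact (mem_blk.1 hb).1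
end

section
variable {M : Type*} [Ring M] [Algebra ℂ M] (E : M →ₗ[ℂ] ℂ) (α β t γ : ℂ) (a : ℕ → M)

/-- The factor contributed by a closed block: `α E(a_B)` for a singleton, `t E(a_B)` for larger blocks. -/
def wt (B : Finset ℕ) : ℂ :=
  α ^ (if B.card = 1 then 1 else 0) * t ^ (if 2 ≤ B.card then 1 else 0) * E (aP a B)

/-- The scalar coefficient of the term belonging to a state. -/
def Kc (n : ℕ) (q : St) : ℂ :=
  β ^ (n + q.S.length + nsing n q - 2 * nroots n q.s) * γ ^ (nroots n q.s - nroots n q.p)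
    * ∏ v ∈ clRoots n q, wt E α t a (blk n q.p v)

variable {n : ℕ} {q : St}

theorem Kc_A (h : Valid n q) : Kc E α β t γ a (n+1) (chA n q) = Kc E α β t γ a n q := by
  have hp := h.p_ge n le_rfl
  have hs := h.s_ge n le_rfl
  rw [Kc, Kc, prod_A _ h, nsing_A h]
  simp only [chA, nroots_new hp, nroots_new hs, List.length_cons]
  congr 3 <;> omega

theorem Kc_B (h : Valid n q) : Kc E α β t γ a (n+1) (chB q) = α * E (a n) * Kc E α β t γ a n q := by
  have hp := h.p_ge n le_rfl
  have hs := h.s_ge n le_rfl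
  rw [Kc, Kc, prod_B _ h, nsing_B h]
  simp only [chB, nroots_new hp, nroots_new hs]
  rw [wt, aP_singleton, Finset.card_singleton, if_pos rfl, if_neg (by omega),
    show n + 1 + q.S.length + (nsing n q + 1) - 2 * (nroots n q.s + 1) = n + q.S.length + nsing n q - 2 * nroots n q.s by omega,
    show nroots n q.s + 1 - (nroots n q.p + 1) = nroots n q.s - nroots n q.p by omega]
  ring

theorem Kc_C (h : Valid n q) {v r} (hS : q.S = v :: r) :
    Kc E α β t γ a (n+1) (chC n v q) = β * Kc E α β t γ a n q := by
  have hv := h.S_lt v (by simp [hS])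
  have hi := count_inv h
  rw [Kc, Kc, prod_C _ h hS, nsing_C h hS]
  simp only [chC, nroots_join hv.ne]
  rw [show n + 1 + q.S.length + nsing n q - 2 * nroots n q.s = n + q.S.length + nsing n q - 2 * nroots n q.s + 1 by omega]
  ring

theorem Kc_D (h : Valid n q) {v r} (hS : q.S = v :: r) :
    Kc E α β t γ a (n+1) (chD n v q r) = t * E (aP a (blk n q.p v) * a n) * Kc E α β t γ a n q := by
  have hv := h.S_lt v (by simp [hS])
  have hr := h.S_root v (by simp [hS])
  have hc : (insert n (blk n q.p v)).card = (blk n q.p v).card + 1 :=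
    Finset.card_insert_of_notMem (by simp [mem_blk])
  have : 0 < (blk n q.p v).card := Finset.card_pos.2 ⟨v, mem_blk.2 ⟨hv, hr⟩⟩
  rw [Kc, Kc, prod_D _ h hS, nsing_D h hS]
  simp only [chD, nroots_join hv.ne]
  rw [wt, aP_insert _ (fun b hb => (mem_blk.1 hb).1), if_neg (by omega), if_pos (by omega), hS, List.length_cons,
    show n + 1 + r.length + nsing n q = n + (r.length + 1) + nsing n q by omega]
  ring

theorem Kc_E (h : Valid n q) {v u r} (hS : q.S = v :: u :: r) :
    Kc E α β t γ a (n+1) (chE n v u q r) = γ * Kc E α β t γ a n q := by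
  have hv := h.S_lt v (by simp [hS])
  have hr := h.S_root v (by simp [hS])
  have hs := h.sorted
  rw [hS, List.pairwise_cons] at hs
  have huv := hs.1 u (by simp)
  have := nroots_merge huv hv hr (h.S_root u (by simp [hS]))
  have hi := count_inv h
  rw [Kc, Kc, prod_E _ h hS, nsing_E h hS]
  simp only [chE, nroots_join hv.ne]
  rw [← this] at hi ⊢
  rw [hS]
  simp only [List.length_cons]
  rw [show n + 1 + (r.length + 1) + nsing n q = n + (r.length + 1 + 1) + nsing n q by omega,
    show nroots n q.s - nroots (n+1) (fun i => if i = n ∨ q.p i = v then u else q.p i) =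
      nroots n q.s - (nroots (n+1) (fun i => if i = n ∨ q.p i = v then u else q.p i) + 1) + 1 by omega]
  ring

variable (W : (m : ℕ) → (Fin m → M) → TensorAlgebra ℂ M)

/-- The term of the expansion belonging to a state. -/
def stVal (n : ℕ) (q : St) : TensorAlgebra ℂ M := Kc E α β t γ a n q • Wr W (bl a n q)

variable {E α β t γ W}

/-- Multiplying the term of a state by the next letter gives the sum of the terms of its extensions:
the recursion for `W`, solved for the product, has one summand for each of them. -/
theorem val_step (hW : WRec E α β t γ W) (h : Valid n q) :
    stVal E α β t γ a W n q * TensorAlgebra.ι ℂ (a n) = ∑ q' ∈ children n q, stVal E α β t γ a W (n+1) q' := by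
  have hp := h.p_ge n le_rfl
  have hs := h.s_ge n le_rfl
  have hAB : chA n q ≠ chB q := fun e => by
    have := congrArg (fun x => x.S.length) e; simp [chA, chB] at this
  rw [stVal, smul_mul_assoc]
  match hS : q.S with
  | [] =>
    have hb : bl a n q = [] := by simp [bl, hS]
    simp only [children, hS]
    rw [Finset.sum_pair hAB, stVal, stVal, Kc_A E α β t γ a h, Kc_B E α β t γ a h, bl_A a h, bl_B a h, hb,
      hW.mul_nil, smul_add, smul_smul, mul_comm (Kc E α β t γ a n q)]
  | v :: r =>
    have hv := h.S_lt v (by simp [hS])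
    have hAC : chA n q ≠ chC n v q := fun e => by
      have := congrArg (fun x => x.S.length) e; simp [chA, chC] at this
    have hAD : chA n q ≠ chD n v q r := fun e => by
      have := congrArg (fun x => x.S.length) e; simp [chA, chD, hS] at this; omega
    have hBC : chB q ≠ chC n v q := fun e => by
      have := congrArg (fun x => x.s n) e; simp [chB, chC] at this; omega
    have hBD : chB q ≠ chD n v q r := fun e => by
      have := congrArg (fun x => x.s n) e; simp [chB, chD] at this; omega
    have hCD : chC n v q ≠ chD n v q r := fun e => by
      have := congrArg (fun x => x.S.length) e; simp [chC, chD, hS] at this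
    match r, hS with
    | [], hS =>
      have hb : bl a n q = [aP a (blk n q.p v)] := by simp [bl, hS]
      simp only [children, hS]
      rw [Finset.sum_insert (by simp [*]), Finset.sum_insert (by simp [*]), Finset.sum_pair hCD]
      simp only [stVal]
      rw [Kc_A E α β t γ a h, Kc_B E α β t γ a h, Kc_C E α β t γ a h hS, Kc_D E α β t γ a h hS,
        bl_A a h, bl_B a h, bl_C a h hS, bl_D a h hS, hb, hW.mul_one]
      simp only [smul_add, smul_smul, mul_comm (Kc E α β t γ a n q), List.map_nil]
      abel
    | u :: r, hS =>
      have hb : bl a n q = aP a (blk n q.p v) :: aP a (blk n q.p u) :: r.map fun w => aP a (blk n q.p w) := by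
        simp [bl, hS]
      have hs' := h.sorted
      rw [hS, List.pairwise_cons] at hs'
      have huv := hs'.1 u (by simp)
      have hAE : chA n q ≠ chE n v u q r := fun e => by
        have := congrArg (fun x => x.S.length) e; simp [chA, chE, hS] at this; omega
      have hBE : chB q ≠ chE n v u q r := fun e => by
        have := congrArg (fun x => x.s n) e; simp [chB, chE] at this; omega
      have hCE : chC n v q ≠ chE n v u q r := fun e => by
        have := congrArg (fun x => x.S.length) e; simp [chC, chE, hS] at this
      have hDE : chD n v q (u :: r) ≠ chE n v u q r := fun e => by
        have := congrArg (fun x => x.p n) e; simp [chD, chE] at this; omega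
      simp only [children, hS]
      rw [Finset.sum_insert (by simp [*]), Finset.sum_insert (by simp [*]), Finset.sum_insert (by simp [*]),
        Finset.sum_pair hDE]
      simp only [stVal]
      rw [Kc_A E α β t γ a h, Kc_B E α β t γ a h, Kc_C E α β t γ a h hS, Kc_D E α β t γ a h hS,
        Kc_E E α β t γ a h hS,
        bl_A a h, bl_B a h, bl_C a h hS, bl_D a h hS, bl_E a h hS, hb, hW.mul_more]
      simp only [smul_add, smul_smul, mul_comm (Kc E α β t γ a n q), List.map_cons]
      abel

/-- The expansion of the product of the letters as a sum over valid states, by induction on `n`. -/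
theorem sum_val (hW : WRec E α β t γ W) (n : ℕ) :
    ((List.range n).map fun i => TensorAlgebra.ι ℂ (a i)).prod = ∑ q ∈ T n, stVal E α β t γ a W n q := by
  induction n with
  | zero =>
    simp [T, stVal, Kc, bl, hW.nil, nsing, nroots, clRoots]
  | succ n ih =>
    rw [List.range_succ, List.map_append, List.prod_append, ih, sum_T_succ, Finset.sum_mul]
    refine Finset.sum_congr rfl fun q hq => ?_
    rw [← val_step a hW (mem_T.1 hq)]
    simp
end

/-! ### Partitions of `Fin n` as block-minimum functions -/

/-- `f` sends each `i` to the minimum of its block, for some partition of `{0, …, n-1}`, and is the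
identity from `n` on. -/
structure MinFn (n : ℕ) (f : ℕ → ℕ) : Prop where
  ge : ∀ i, n ≤ i → f i = i
  le : ∀ i, f i ≤ i
  idem : ∀ i, f (f i) = f i

/-- The class of `v`, as a subset of `Fin n`. -/
def fb (n : ℕ) (f : ℕ → ℕ) (v : ℕ) : Finset (Fin n) := univ.filter fun i => f i = v

/-- The set of blocks of the partition with block-minimum function `f`. -/
def bsOf (n : ℕ) (f : ℕ → ℕ) : Finset (Finset (Fin n)) := univ.image fun i : Fin n => fb n f (f i)

theorem mem_fb {n f v} {i : Fin n} : i ∈ fb n f v ↔ f i = v := by simp [fb]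

theorem mem_bsOf {n f} (h : MinFn n f) {B} : B ∈ bsOf n f ↔ ∃ v, v < n ∧ f v = v ∧ B = fb n f v := by
  simp only [bsOf, Finset.mem_image, Finset.mem_univ, true_and]
  constructor
  · rintro ⟨i, rfl⟩
    exact ⟨f i, (h.le i).trans_lt i.2, h.idem i, rfl⟩
  · rintro ⟨v, h1, h2, rfl⟩
    exact ⟨⟨v, h1⟩, by simp only [h2]⟩

theorem bsOf_eq {n f} (h : MinFn n f) : bsOf n f = ((range n).filter fun v => f v = v).image (fb n f) := by
  ext B
  simp only [mem_bsOf h, Finset.mem_image, Finset.mem_filter, Finset.mem_range]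
  constructor
  · rintro ⟨v, h1, h2, rfl⟩; exact ⟨v, ⟨h1, h2⟩, rfl⟩
  · rintro ⟨v, ⟨h1, h2⟩, rfl⟩; exact ⟨v, h1, h2, rfl⟩

theorem fb_inj {n f v w} (h1 : v < n) (h2 : f v = v) (e : fb n f v = fb n f w) : v = w := by
  have : (⟨v, h1⟩ : Fin n) ∈ fb n f v := mem_fb.2 h2
  rw [e, mem_fb] at this
  exact h2.symm.trans this

theorem card_bsOf {n f} (h : MinFn n f) : (bsOf n f).card = nroots n f := by
  rw [bsOf_eq h, Finset.card_image_of_injOn, nroots]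
  intro v hv w _ e
  simp only [Finset.coe_filter, Finset.mem_range, Set.mem_setOf_eq] at hv
  exact fb_inj hv.1 hv.2 e

theorem isPartition_bsOf {n f} (h : MinFn n f) : IsPartition (bsOf n f) := by
  refine ⟨fun B hB => ?_, fun i => ⟨fb n f (f i), ⟨(mem_bsOf h).2 ⟨f i, (h.le i).trans_lt i.2, h.idem i, rfl⟩, mem_fb.2 rfl⟩, ?_⟩⟩
  · obtain ⟨v, h1, h2, rfl⟩ := (mem_bsOf h).1 hB
    exact ⟨⟨v, h1⟩, mem_fb.2 h2⟩
  · rintro B ⟨hB, hi⟩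
    obtain ⟨v, h1, h2, rfl⟩ := (mem_bsOf h).1 hB
    rw [mem_fb.1 hi]

/-- The block-minimum function of a partition of `Fin n`, extended to `ℕ` by the identity. For
`i < n` the set is nonempty as soon as some block of `P` contains `i`. -/
def minOf {n : ℕ} (P : Finset (Finset (Fin n))) (i : ℕ) : ℕ :=
  if h : i < n then sInf {j | ∃ hj : j < n, ∃ B ∈ P, (⟨j, hj⟩ : Fin n) ∈ B ∧ (⟨i, h⟩ : Fin n) ∈ B} else i

theorem block_unique {n : ℕ} {P : Finset (Finset (Fin n))} (h : IsPartition P) {B C i} (hB : B ∈ P) (hC : C ∈ P)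
    (h1 : i ∈ B) (h2 : i ∈ C) : B = C := (h.2 i).unique ⟨hB, h1⟩ ⟨hC, h2⟩

/-- In a block `B`, `minOf P` is constant, equal to an element of `B` that is a lower bound. -/
theorem minOf_spec {n : ℕ} {P : Finset (Finset (Fin n))} (h : IsPartition P) {B} (hB : B ∈ P) :
    ∃ m ∈ B, (∀ i ∈ B, m ≤ i) ∧ ∀ i ∈ B, minOf P i = m := by
  have hne := h.1 B hB
  refine ⟨B.min' hne, B.min'_mem hne, fun i hi => B.min'_le i hi, fun i hi => ?_⟩
  rw [minOf, dif_pos i.2]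
  apply le_antisymm
  · exact Nat.sInf_le ⟨(B.min' hne).2, B, hB, B.min'_mem hne, hi⟩
  · refine le_csInf ⟨i.1, i.2, B, hB, hi, hi⟩ ?_
    rintro j ⟨hj, C, hC, h1, h2⟩
    obtain rfl := block_unique h hC hB h2 hi
    exact C.min'_le _ h1

theorem minOf_isMin {n : ℕ} {P : Finset (Finset (Fin n))} (h : IsPartition P) : MinFn n (minOf P) := by
  have key : ∀ i : Fin n, minOf P i ≤ i ∧ minOf P (minOf P i) = minOf P i := by
    intro i
    obtain ⟨B, ⟨hB, hi⟩, -⟩ := h.2 i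
    obtain ⟨m, hm, h1, h2⟩ := minOf_spec h hB
    rw [h2 i hi, h2 m hm]
    exact ⟨h1 i hi, rfl⟩
  have hge : ∀ i, n ≤ i → minOf P i = i := fun i hi => by rw [minOf, dif_neg (by omega)]
  refine ⟨hge, fun i => ?_, fun i => ?_⟩
  · by_cases hi : i < n
    · exact (key ⟨i, hi⟩).1
    · exact (hge i (by omega)).le
  · by_cases hi : i < n
    · exact (key ⟨i, hi⟩).2
    · rw [hge i (by omega), hge i (by omega)]

theorem fb_minOf {n : ℕ} {P : Finset (Finset (Fin n))} (h : IsPartition P) {B} (hB : B ∈ P) {i} (hi : i ∈ B) :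
    fb n (minOf P) (minOf P i) = B := by
  obtain ⟨m, hm, h1, h2⟩ := minOf_spec h hB
  ext j
  rw [mem_fb, h2 i hi]
  constructor
  · intro hj
    obtain ⟨C, ⟨hC, hjC⟩, -⟩ := h.2 j
    obtain ⟨m', hm', h1', h2'⟩ := minOf_spec h hC
    rw [h2' j hjC] at hj
    obtain rfl := Fin.ext hj
    rwa [block_unique h hB hC hm hm']
  · exact h2 j

theorem bsOf_minOf {n : ℕ} {P : Finset (Finset (Fin n))} (h : IsPartition P) : bsOf n (minOf P) = P := by
  ext B
  simp only [bsOf, Finset.mem_image, Finset.mem_univ, true_and]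
  constructor
  · rintro ⟨i, rfl⟩
    obtain ⟨B, ⟨hB, hi⟩, -⟩ := h.2 i
    rwa [fb_minOf h hB hi]
  · intro hB
    obtain ⟨i, hi⟩ := h.1 B hB
    exact ⟨i, fb_minOf h hB hi⟩

theorem bsOf_inj {n f g} (hf : MinFn n f) (hg : MinFn n g) (e : bsOf n f = bsOf n g) : f = g := by
  -- each value is the least element of a block, and the blocks agree
  have key : ∀ f g, MinFn n f → MinFn n g → bsOf n f = bsOf n g → ∀ i, g i ≤ f i := by
    intro f g hf hg e i
    by_cases hi : i < n
    · have h1 : fb n f (f i) ∈ bsOf n g := by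
        rw [← e, mem_bsOf hf]; exact ⟨f i, (hf.le i).trans_lt hi, hf.idem i, rfl⟩
      obtain ⟨w, -, -, h2⟩ := (mem_bsOf hg).1 h1
      have h3 : (⟨i, hi⟩ : Fin n) ∈ fb n f (f i) := mem_fb.2 rfl
      have h4 : (⟨f i, (hf.le i).trans_lt hi⟩ : Fin n) ∈ fb n f (f i) := mem_fb.2 (hf.idem i)
      rw [h2, mem_fb] at h3 h4
      have := hg.le (f i)
      simp only at h3 h4
      omega
    · rw [hf.ge i (by omega), hg.ge i (by omega)]
  exact funext fun i => le_antisymm (key g f hg hf e.symm i) (key f g hf hg e i)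

theorem noncrossing_bsOf {n f} (h : MinFn n f) : IsNoncrossing (bsOf n f) ↔
    ∀ i j k l, i < j → j < k → k < l → f i = f k → f j = f l → f i = f j := by
  constructor
  · intro hN i j k l hij hjk hkl hik hjl
    by_contra hne
    by_cases hl : l < n
    · have hr : ∀ x, x < n → fb n f (f x) ∈ bsOf n f := fun x hx =>
        (mem_bsOf h).2 ⟨f x, (h.le x).trans_lt hx, h.idem x, rfl⟩
      refine hN ⟨fb n f (f i), hr i (by omega), fb n f (f j), hr j (by omega), fun e => hne ?_,
        ⟨i, by omega⟩, mem_fb.2 rfl, ⟨k, by omega⟩, mem_fb.2 hik.symm, ⟨j, by omega⟩, mem_fb.2 rfl, ⟨l, hl⟩, mem_fb.2 hjl.symm,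
        hij, hjk, hkl⟩
      exact fb_inj ((h.le i).trans_lt (by omega)) (h.idem i) e
    · have := h.ge l (by omega)
      have := h.le j
      omega
  · rintro hN ⟨U, hU, V, hV, hne, i, hi, k, hk, j, hj, l, hl, h1, h2, h3⟩
    obtain ⟨u, -, -, rfl⟩ := (mem_bsOf h).1 hU
    obtain ⟨v, -, -, rfl⟩ := (mem_bsOf h).1 hV
    rw [mem_fb] at hi hk hj hl
    have := hN i j k l h1 h2 h3 (by omega) (by omega)
    exact hne (by rw [← hi, ← hj, this])

theorem refines_bsOf {n p s} (hp : MinFn n p) (hs : MinFn n s) : Refines (bsOf n s) (bsOf n p) ↔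
    ∀ i, p (s i) = p i := by
  constructor
  · intro h i
    by_cases hi : i < n
    · have hsi := (hs.le i).trans_lt hi
      obtain ⟨C, hC, hsub⟩ := h (fb n s (s i)) ((mem_bsOf hs).2 ⟨s i, hsi, hs.idem i, rfl⟩)
      obtain ⟨w, -, -, rfl⟩ := (mem_bsOf hp).1 hC
      have h1 := hsub (show (⟨i, hi⟩ : Fin n) ∈ _ from mem_fb.2 rfl)
      have h2 := hsub (show (⟨s i, hsi⟩ : Fin n) ∈ _ from mem_fb.2 (hs.idem i))
      rw [mem_fb] at h1 h2
      exact h2.trans h1.symm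
    · rw [hs.ge i (by omega)]
  · intro h B hB
    obtain ⟨w, h1, h2, rfl⟩ := (mem_bsOf hs).1 hB
    refine ⟨fb n p (p w), (mem_bsOf hp).2 ⟨p w, (hp.le w).trans_lt h1, hp.idem w, rfl⟩, fun i hi => ?_⟩
    rw [mem_fb] at hi ⊢
    rw [← h, hi]

/-- For a non-crossing partition, a block is outer if and only if no other block has points on both
sides of its minimum. -/
theorem outer_bsOf {n p} (hp : MinFn n p) (hnc : ∀ i j k l, i < j → j < k → k < l → p i = p k → p j = p l → p i = p j)
    {v} (hv : v < n) (hpv : p v = v) : IsOuter (bsOf n p) (fb n p v) ↔ ∀ i j, i < v → v < j → p i ≠ p j := by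
  constructor
  · intro h i j hi hj e
    have hpi := hp.le i
    have hjn : j < n := by
      by_contra
      have := hp.ge j (by omega)
      omega
    refine h ⟨fb n p (p i), (mem_bsOf hp).2 ⟨p i, by omega, hp.idem i, rfl⟩, fun e' => ?_,
      ⟨i, by omega⟩, mem_fb.2 rfl, ⟨j, hjn⟩, mem_fb.2 e.symm, fun x hx => ?_⟩
    · have := fb_inj (by omega) (hp.idem i) e'
      omega
    · rw [mem_fb] at hx
      have hx' := hp.le x
      refine ⟨Fin.lt_def.2 (show i < x by omega), Fin.lt_def.2 (show x.1 < j from ?_)⟩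
      by_contra hlt
      rcases (not_lt.1 hlt).eq_or_lt with e' | h'
      · rw [e'] at e; omega
      · have := hnc i v j x hi hj h' e (by omega)
        omega
  · rintro h ⟨U, hU, hne, i, hi, j, hj, hx⟩
    obtain ⟨u, -, -, rfl⟩ := (mem_bsOf hp).1 hU
    rw [mem_fb] at hi hj
    have := hx ⟨v, hv⟩ (mem_fb.2 hpv)
    exact h i j this.1 this.2 (by omega)

/-- The set of open blocks of a state. -/
def opens (n : ℕ) (q : St) : Finset (Finset (Fin n)) := q.S.toFinset.image (fb n q.p)

theorem mem_opens {n q B} : B ∈ opens n q ↔ ∃ v ∈ q.S, fb n q.p v = B := by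
  simp [opens]

/-- `q.p` and `q.s` are block-minimum functions of partitions of `{0, …, n-1}`, and `q.S` is a
decreasing list of minima of blocks of `q.p`: the part of `Valid` that makes a state a faithful code
for a triple of set systems. -/
structure Pre (n : ℕ) (q : St) : Prop where
  p : MinFn n q.p
  s : MinFn n q.s
  sorted : q.S.Pairwise (· > ·)
  S_lt : ∀ v ∈ q.S, v < n
  S_root : ∀ v ∈ q.S, q.p v = v

theorem Valid.pre {n q} (h : Valid n q) : Pre n q :=
  ⟨⟨h.p_ge, h.p_le, h.p_idem⟩, ⟨h.s_ge, h.s_le, h.s_idem⟩, h.sorted, h.S_lt, h.S_root⟩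

theorem Pre.mem_opens_fb {n q} (h : Pre n q) {v} (hv : v < n) (hr : q.p v = v) : fb n q.p v ∈ opens n q ↔ v ∈ q.S := by
  rw [mem_opens]
  constructor
  · rintro ⟨w, hw, e⟩
    rwa [fb_inj hv hr e.symm]
  · intro hw; exact ⟨v, hw, rfl⟩

theorem Pre.opens_sub {n q} (h : Pre n q) : opens n q ⊆ bsOf n q.p := by
  intro B hB
  obtain ⟨v, hv, rfl⟩ := mem_opens.1 hB
  exact (mem_bsOf h.p).2 ⟨v, h.S_lt v hv, h.S_root v hv, rfl⟩

theorem exists_max {n : ℕ} {p : ℕ → ℕ} {v : ℕ} (hv : v < n) (hp : p v = v) (hge : ∀ i, n ≤ i → p i = i) :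
    ∃ j, j < n ∧ p j = v ∧ ∀ k, p k = v → k ≤ j := by
  have hne : (blk n p v).Nonempty := ⟨v, mem_blk.2 ⟨hv, hp⟩⟩
  obtain ⟨h1, h2⟩ := mem_blk.1 ((blk n p v).max'_mem hne)
  refine ⟨_, h1, h2, fun k hk => (blk n p v).le_max' k (mem_blk.2 ⟨?_, hk⟩)⟩
  by_contra
  have := hge k (by omega)
  omega

/-- `Valid` expresses exactly the conditions on `(π, S, σ)` under which the triple is summed over. -/
theorem Pre.valid_iff {n q} (h : Pre n q) : Valid n q ↔
    IsNoncrossing (bsOf n q.p) ∧ (∀ B ∈ opens n q, IsOuter (bsOf n q.p) B) ∧ IsNoncrossing (bsOf n q.s) ∧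
      Refines (bsOf n q.s) (bsOf n q.p) ∧
      (∀ U ∈ bsOf n q.p, U ∉ opens n q → ∃ C ∈ bsOf n q.s, ∃ m ∈ U, ∃ M ∈ U, m ∈ C ∧ M ∈ C
              ∧ (∀ x ∈ U, m ≤ x) ∧ (∀ x ∈ U, x ≤ M)) ∧
      (∀ B ∈ bsOf n q.s, B.card = 1 →
            (B ∈ bsOf n q.p ∨ ∃ V ∈ opens n q, ∃ x ∈ B, x ∈ V ∧ ∀ y ∈ V, x ≤ y)) := by
  constructor
  · intro hV
    refine ⟨(noncrossing_bsOf h.p).2 hV.p_nc, ?_, (noncrossing_bsOf h.s).2 hV.s_nc, (refines_bsOf h.p h.s).2 hV.ref, ?_, ?_⟩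
    · intro B hB
      obtain ⟨v, hv, rfl⟩ := mem_opens.1 hB
      exact (outer_bsOf h.p hV.p_nc (h.S_lt v hv) (h.S_root v hv)).2 (hV.outer v hv)
    · intro U hU hUS
      obtain ⟨v, hv, hr, rfl⟩ := (mem_bsOf h.p).1 hU
      rw [h.mem_opens_fb hv hr] at hUS
      obtain ⟨j, hj, hpj, hmax⟩ := exists_max hv hr h.p.ge
      have hsj : q.s j = v := by
        rw [← hpj]; exact hV.closed j hj (by rwa [hpj]) (by rwa [hpj])
      have hsv : q.s v = v := by rw [← hsj, h.s.idem]
      refine ⟨fb n q.s v, (mem_bsOf h.s).2 ⟨v, hv, hsv, rfl⟩, ⟨v, hv⟩, mem_fb.2 hr, ⟨j, hj⟩, mem_fb.2 hpj,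
        mem_fb.2 hsv, mem_fb.2 hsj, fun x hx => ?_, fun x hx => ?_⟩
      · rw [mem_fb] at hx
        exact Fin.le_def.2 (hx ▸ h.p.le x)
      · exact Fin.le_def.2 (hmax x (mem_fb.1 hx))
    · intro B hB hc
      obtain ⟨i, hi, hr, rfl⟩ := (mem_bsOf h.s).1 hB
      have hone : fb n q.s i = {⟨i, hi⟩} := by
        obtain ⟨x, hx⟩ := Finset.card_eq_one.1 hc
        have : (⟨i, hi⟩ : Fin n) ∈ fb n q.s i := mem_fb.2 hr
        rw [hx, Finset.mem_singleton] at this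
        rw [hx, this]
      obtain ⟨h1, h2⟩ := hV.sing i hi hr fun j hj => by
        by_cases hjn : j < n
        · have : (⟨j, hjn⟩ : Fin n) ∈ fb n q.s i := mem_fb.2 hj
          rw [hone, Finset.mem_singleton] at this
          exact congrArg Fin.val this
        · have := h.s.ge j (by omega)
          omega
      rcases h2 with h2 | h2
      · refine Or.inr ⟨fb n q.p i, mem_opens.2 ⟨i, h2, rfl⟩, ⟨i, hi⟩, mem_fb.2 hr, mem_fb.2 h1, fun y hy => ?_⟩
        rw [mem_fb] at hy
        exact Fin.le_def.2 (hy ▸ h.p.le y)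
      · left
        refine (mem_bsOf h.p).2 ⟨i, hi, h1, ?_⟩
        rw [hone]
        ext j
        rw [Finset.mem_singleton, mem_fb]
        exact ⟨fun e => by rw [e]; exact h1, fun e => Fin.ext (h2 j e)⟩
  · rintro ⟨h1, h2, h3, h4, h5, h6⟩
    rw [noncrossing_bsOf h.p] at h1
    rw [noncrossing_bsOf h.s] at h3
    rw [refines_bsOf h.p h.s] at h4
    refine ⟨h.p.ge, h.s.ge, h.p.le, h.s.le, h.p.idem, h.s.idem, h1, h3, h4, h.sorted, h.S_lt, h.S_root, ?_, ?_, ?_⟩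
    · intro v hv
      exact (outer_bsOf h.p h1 (h.S_lt v hv) (h.S_root v hv)).1 (h2 _ (mem_opens.2 ⟨v, hv, rfl⟩))
    · intro j hj hS hmax
      have hpj := h.p.le j
      obtain ⟨C, hC, m, hm, M, hM, hmC, hMC, hmin, hmax'⟩ := h5 (fb n q.p (q.p j))
        ((mem_bsOf h.p).2 ⟨q.p j, by omega, h.p.idem j, rfl⟩) (by rwa [h.mem_opens_fb (by omega) (h.p.idem j)])
      obtain ⟨w, -, -, rfl⟩ := (mem_bsOf h.s).1 hC
      have e1 := Fin.le_def.1 (hmin ⟨q.p j, by omega⟩ (mem_fb.2 (h.p.idem j)))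
      have e2 := Fin.le_def.1 (hmax' ⟨j, hj⟩ (mem_fb.2 rfl))
      rw [mem_fb] at hm hM hmC hMC
      have e3 := hmax M hM
      have e4 := h.p.le m
      simp only at e1 e2
      have e5 : (M : ℕ) = j := by omega
      have e6 : (m : ℕ) = q.p j := by omega
      rw [e5] at hMC
      have e7 := h4 m
      have e8 := h.p.le (q.s m)
      have e9 := h.s.le m
      omega
    · intro i hi hsi hs
      have hone : fb n q.s i = {⟨i, hi⟩} := by
        ext j
        rw [Finset.mem_singleton, mem_fb]
        exact ⟨fun e => Fin.ext (hs j e), fun e => by rw [e]; exact hsi⟩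
      rcases h6 _ ((mem_bsOf h.s).2 ⟨i, hi, hsi, rfl⟩) (by rw [hone, Finset.card_singleton]) with h7 | ⟨V, hV, x, hx, hxV, hle⟩
      · obtain ⟨w, hw, hr, e⟩ := (mem_bsOf h.p).1 h7
        rw [hone] at e
        have h8 : (⟨w, hw⟩ : Fin n) ∈ fb n q.p w := mem_fb.2 hr
        rw [← e, Finset.mem_singleton, Fin.mk.injEq] at h8
        subst h8
        refine ⟨hr, Or.inr fun j hj => ?_⟩
        by_cases hjn : j < n
        · have : (⟨j, hjn⟩ : Fin n) ∈ fb n q.p w := mem_fb.2 hj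
          rw [← e, Finset.mem_singleton] at this
          exact congrArg Fin.val this
        · have := h.p.ge j (by omega)
          omega
      · obtain ⟨w, hw, rfl⟩ := mem_opens.1 hV
        rw [hone, Finset.mem_singleton] at hx
        subst hx
        have e1 := Fin.le_def.1 (hle ⟨w, h.S_lt w hw⟩ (mem_fb.2 (h.S_root w hw)))
        rw [mem_fb] at hxV
        have := h.p.le i
        simp only at hxV e1
        have e2 : i = w := by omega
        subst e2
        exact ⟨hxV, Or.inl hw⟩

/-! ### From states to triples of set systems -/

/-- The triple of set systems on `Fin n` encoded by a state. -/
def triple (n : ℕ) (q : St) :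
    Σ _ : (Σ _ : Finset (Finset (Fin n)), Finset (Finset (Fin n))), Finset (Finset (Fin n)) :=
  ⟨⟨bsOf n q.p, opens n q⟩, bsOf n q.s⟩

theorem triple_inj {n q q'} (h : Pre n q) (h' : Pre n q') (e : triple n q = triple n q') : q = q' := by
  simp only [triple, Sigma.mk.injEq, heq_eq_eq] at e
  obtain ⟨⟨e1, e2⟩, e3⟩ := e
  have hp := bsOf_inj h.p h'.p e1
  have hs := bsOf_inj h.s h'.s e3
  have hS : q.S = q'.S := by
    refine List.Perm.eq_of_pairwise (le := (· > ·)) (fun a b _ _ h1 h2 => by omega) h.sorted h'.sorted ?_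
    rw [List.perm_ext_iff_of_nodup (h.sorted.imp fun h => h.ne') (h'.sorted.imp fun h => h.ne')]
    intro v
    constructor
    · intro hv
      have hr := h.S_root v hv
      rw [← h'.mem_opens_fb (h.S_lt v hv) (hp ▸ hr), ← e2, ← hp]
      exact (h.mem_opens_fb (h.S_lt v hv) hr).2 hv
    · intro hv
      have hr := h'.S_root v hv
      rw [← h.mem_opens_fb (h'.S_lt v hv) (hp ▸ hr), e2, hp]
      exact (h'.mem_opens_fb (h'.S_lt v hv) hr).2 hv
  cases q; cases q'; simp_all

theorem triple_surj {n : ℕ} {P R Q : Finset (Finset (Fin n))} (hP : IsPartition P) (hQ : IsPartition Q) (hR : R ⊆ P) :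
    ∃ q, Pre n q ∧ triple n q = ⟨⟨P, R⟩, Q⟩ := by
  have hp := minOf_isMin hP
  refine ⟨⟨minOf P, minOf Q, (((range n).filter fun v => minOf P v = v ∧ fb n (minOf P) v ∈ R).sort (· ≥ ·))⟩,
    ⟨hp, minOf_isMin hQ, ?_, ?_, ?_⟩, ?_⟩
  · exact (Finset.sortedGT_sort ((range n).filter fun v => minOf P v = v ∧ fb n (minOf P) v ∈ R)).pairwise
  · intro v hv
    simp only [Finset.mem_sort, Finset.mem_filter, Finset.mem_range] at hv
    exact hv.1
  · intro v hv
    simp only [Finset.mem_sort, Finset.mem_filter, Finset.mem_range] at hv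
    exact hv.2.1
  · simp only [triple, bsOf_minOf hP, bsOf_minOf hQ]
    congr 2
    ext B
    simp only [mem_opens, Finset.mem_sort, Finset.mem_filter, Finset.mem_range]
    constructor
    · rintro ⟨v, ⟨-, -, h⟩, rfl⟩; exact h
    · intro hB
      obtain ⟨v, h1, h2, rfl⟩ := (mem_bsOf hp).1 (by rw [bsOf_minOf hP]; exact hR hB)
      exact ⟨v, ⟨h1, h2, hB⟩, rfl⟩

section
variable {M : Type*} [Ring M] {n : ℕ}

/-- `a` extended by zero to all of `ℕ`. -/
def ext0 (a : Fin n → M) (i : ℕ) : M := if h : i < n then a ⟨i, h⟩ else 0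

theorem ext0_val (a : Fin n → M) (i : Fin n) : ext0 a i = a i := by simp [ext0]

theorem map_fb {f : ℕ → ℕ} (v : ℕ) : (fb n f v).map Fin.valEmbedding = blk n f v := by
  ext i
  simp only [Finset.mem_map, mem_fb, mem_blk, Fin.valEmbedding_apply]
  constructor
  · rintro ⟨j, h, rfl⟩; exact ⟨j.2, h⟩
  · rintro ⟨h1, h2⟩; exact ⟨⟨i, h1⟩, h2, rfl⟩

theorem card_fb {f : ℕ → ℕ} (v : ℕ) : (fb n f v).card = (blk n f v).card := by
  rw [← map_fb, Finset.card_map]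

theorem aProd_fb (a : Fin n → M) (f : ℕ → ℕ) (v : ℕ) : aProd a (fb n f v) = aP (ext0 a) (blk n f v) := by
  have h := Finset.map_sort (r := (· ≤ ·)) (r' := (· ≤ ·)) Fin.valEmbedding (fb n f v)
    (fun a _ b _ => Iff.rfl)
  rw [map_fb] at h
  rw [aP, ← h, List.map_map, aProd]
  congr 2
  funext i
  exact (ext0_val a i).symm

variable {N : Type*} (W : (m : ℕ) → (Fin m → M) → N)

theorem W_congr {m m' : ℕ} (e : m = m') (f : Fin m → M) (g : Fin m' → M) (h : ∀ i (h1 : i < m) (h2 : i < m'), f ⟨i, h1⟩ = g ⟨i, h2⟩) :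
    W m f = W m' g := by
  subst e
  congr 1
  funext i
  exact h i i.2 i.2

/-- Applying `W` to the terms of a list in order is applying `Wr` to the reversed list. -/
theorem W_of_list {ι : Type*} (L : List ι) (f : ι → M) (L' : List M) (h : L.map f = L'.reverse) :
    W L.length (fun j => f (L.get j)) = Wr W L' := by
  have hl : L.length = L'.length := by
    have := congrArg List.length h; simpa using this
  refine W_congr W hl _ _ fun i h1 h2 => ?_
  have : (L.map f)[i]'(by simpa using h1) = (L'.reverse)[i]'(by simpa using h2) := by simp only [h]
  rw [List.getElem_map, List.getElem_reverse] at this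
  simp only [List.get_eq_getElem, this, Fin.val_rev]
  congr 1
  omega
end

/-- Ordering the open blocks by their largest elements, as `maxElts` does, agrees with ordering them
by their minima. -/
theorem maxElts_opens {n q} (h : Valid n q) : (maxElts (opens n q)).map (fun i : Fin n => q.p i) = q.S.reverse := by
  have hmem : ∀ i, i ∈ maxElts (opens n q) ↔ q.p i ∈ q.S ∧ ∀ k, q.p k = q.p i → k ≤ i := by
    intro i
    simp only [maxElts, Finset.mem_sort, Finset.mem_filter, Finset.mem_univ, true_and, mem_opens]
    constructor
    · rintro ⟨B, ⟨v, hv, rfl⟩, h1, h2⟩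
      rw [mem_fb] at h1
      refine ⟨h1 ▸ hv, fun k hk => ?_⟩
      by_cases hkn : k < n
      · exact Fin.le_def.1 (h2 ⟨k, hkn⟩ (mem_fb.2 (by rw [hk, h1])))
      · have h3 := h.p_ge k (by omega)
        have := h.p_le i
        have := i.2
        omega
    · rintro ⟨h1, h2⟩
      exact ⟨_, ⟨_, h1, rfl⟩, mem_fb.2 rfl, fun x hx => Fin.le_def.2 (h2 x (mem_fb.1 hx))⟩
  have hlt : ((maxElts (opens n q)).map fun i : Fin n => q.p i).Pairwise (· < ·) := by
    rw [List.pairwise_map]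
    have hs : (maxElts (opens n q)).Pairwise (· < ·) := (Finset.sortedLT_sort _).pairwise
    refine hs.imp_of_mem fun {i j} hi hj hij => ?_
    rw [hmem] at hi hj
    rcases lt_trichotomy (q.p i) (q.p j) with h1 | h1 | h1
    · exact h1
    · have := hi.2 j h1.symm
      have := Fin.lt_def.1 hij
      omega
    · have := blk_lt_blk h h1 hi.1 (h.p_idem j) j (mem_blk.2 ⟨j.2, rfl⟩) i (mem_blk.2 ⟨i.2, rfl⟩)
      have := Fin.lt_def.1 hij
      omega
  have hrev : q.S.reverse.Pairwise (· < ·) := List.pairwise_reverse.2 h.sorted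
  refine List.Perm.eq_of_pairwise (le := (· < ·)) (fun a b _ _ h1 h2 => by omega) hlt hrev ?_
  rw [List.perm_ext_iff_of_nodup (hlt.imp fun h => h.ne) (hrev.imp fun h => h.ne)]
  intro v
  simp only [List.mem_map, List.mem_reverse, hmem]
  constructor
  · rintro ⟨i, ⟨h1, -⟩, rfl⟩; exact h1
  · intro hv
    obtain ⟨j, hj, hpj, hmax⟩ := exists_max (h.S_lt v hv) (h.S_root v hv) h.p_ge
    exact ⟨⟨j, hj⟩, ⟨by simpa only [hpj] using hv, by simpa only [hpj] using hmax⟩, hpj⟩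

theorem blockOf_opens {n q} (i : Fin n) (hi : q.p i ∈ q.S) : blockOf (opens n q) i = fb n q.p (q.p i) := by
  ext j
  simp only [blockOf, Finset.mem_filter, Finset.mem_univ, true_and, mem_opens, mem_fb]
  constructor
  · rintro ⟨B, ⟨v, hv, rfl⟩, h1, h2⟩
    rw [mem_fb] at h1 h2
    rw [h1, h2]
  · intro e
    exact ⟨_, ⟨_, hi, rfl⟩, mem_fb.2 rfl, mem_fb.2 e⟩

theorem Pre.sdiff {n q} (h : Pre n q) : bsOf n q.p \ opens n q = (clRoots n q).image (fb n q.p) := by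
  ext B
  simp only [Finset.mem_sdiff, mem_bsOf h.p, Finset.mem_image, mem_clRoots]
  constructor
  · rintro ⟨⟨v, h1, h2, rfl⟩, h3⟩
    rw [h.mem_opens_fb h1 h2] at h3
    exact ⟨v, ⟨h1, h2, h3⟩, rfl⟩
  · rintro ⟨v, ⟨h1, h2, h3⟩, rfl⟩
    rw [h.mem_opens_fb h1 h2]
    exact ⟨⟨v, h1, h2, rfl⟩, h3⟩

theorem fb_injOn_clRoots (n q) : Set.InjOn (fb n q.p) (clRoots n q : Set ℕ) := fun v hv w _ e =>
  fb_inj (mem_clRoots.1 hv).1 (mem_clRoots.1 hv).2.1 e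

theorem Pre.card_filter {n q} (h : Pre n q) (P : ℕ → Prop) [DecidablePred P] : ((bsOf n q.p \ opens n q).filter fun U => P U.card).card =
    ∑ v ∈ clRoots n q, if P (blk n q.p v).card then 1 else 0 := by
  rw [h.sdiff, Finset.card_filter, Finset.sum_image (fb_injOn_clRoots n q)]
  simp only [card_fb]

theorem Pre.card_opens {n q} (h : Pre n q) : (opens n q).card = q.S.length := by
  rw [opens, Finset.card_image_of_injOn, List.toFinset_card_of_nodup (h.sorted.imp fun h => h.ne')]
  intro v hv w _ e
  have hv : v ∈ q.S := by simpa using hv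
  exact fb_inj (h.S_lt v hv) (h.S_root v hv) e

section
variable {M : Type*} [Ring M] [Algebra ℂ M] (E : M →ₗ[ℂ] ℂ) (α β t γ : ℂ)
    (W : (m : ℕ) → (Fin m → M) → TensorAlgebra ℂ M)

/-- The value of a valid state is the corresponding term of the right-hand side. -/
theorem term_eq {n : ℕ} (a : Fin n → M) {q : St} (h : Valid n q) :
    ((α ^ ((bsOf n q.p \ opens n q).filter fun U => U.card = 1).card
      * β ^ (n + (opens n q).card + ((bsOf n q.p \ opens n q).filter fun U => U.card = 1).card - 2 * (bsOf n q.s).card)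
      * t ^ ((bsOf n q.p \ opens n q).filter fun U => 2 ≤ U.card).card
      * γ ^ ((bsOf n q.s).card - (bsOf n q.p).card)) * ∏ U ∈ bsOf n q.p \ opens n q, E (aProd a U)) •
        W (maxElts (opens n q)).length (fun j => aProd a (blockOf (opens n q) ((maxElts (opens n q)).get j))) =
      stVal E α β t γ (ext0 a) W n q := by
  have hp := h.pre
  rw [hp.card_filter (· = 1), hp.card_filter (2 ≤ ·), hp.card_opens, card_bsOf hp.p, card_bsOf hp.s, hp.sdiff,
    Finset.prod_image (fb_injOn_clRoots n q), stVal, W_of_list W _ (fun i => aProd a (blockOf (opens n q) i)) (bl (ext0 a) n q)]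
  · congr 1
    rw [Kc]
    simp only [wt, aProd_fb, Finset.prod_mul_distrib, Finset.prod_pow_eq_pow_sum, nsing]
    ring
  · rw [bl, ← List.map_reverse, ← maxElts_opens h, List.map_map]
    refine List.map_congr_left fun i hi => ?_
    have : q.p i ∈ q.S := by
      rw [← List.mem_reverse, ← maxElts_opens h]
      exact List.mem_map.2 ⟨i, hi, rfl⟩
    rw [blockOf_opens i this, aProd_fb, Function.comp]

/-- After distributing the sum in `Ccoef`, the right-hand side is a sum over triples `(π, S, σ)`,
and `triple` is a bijection from valid states onto these triples. -/
theorem sum_transfer {n : ℕ} (a : Fin n → M) :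
    ∑ q ∈ T n, stVal E α β t γ (ext0 a) W n q
      = ∑ π ∈ Finset.univ.filter (fun π : Finset (Finset (Fin n)) =>
            IsPartition π ∧ IsNoncrossing π),
          ∑ S ∈ π.powerset.filter (fun S => ∀ B ∈ S, IsOuter π B),
            (Ccoef α β t γ π S * ∏ U ∈ π \ S, E (aProd a U)) •
              W (maxElts S).length (fun j => aProd a (blockOf S ((maxElts S).get j))) := by
  simp only [Ccoef, Finset.sum_mul, Finset.sum_smul]
  rw [Finset.sum_sigma', Finset.sum_sigma']
  refine Finset.sum_nbij (triple n) ?_ ?_ ?_ ?_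
  · intro q hq
    have h := mem_T.1 hq
    obtain ⟨h1, h2, h3, h4, h5, h6⟩ := h.pre.valid_iff.1 h
    simp only [triple, Finset.mem_sigma, Finset.mem_filter, Finset.mem_univ, true_and, Finset.mem_powerset]
    exact ⟨⟨⟨isPartition_bsOf h.pre.p, h1⟩, h.pre.opens_sub, h2⟩, isPartition_bsOf h.pre.s, h3, h4, h5, h6⟩
  · intro q hq q' hq' e
    exact triple_inj (mem_T.1 hq).pre (mem_T.1 hq').pre e
  · rintro ⟨⟨P, R⟩, Q⟩ hx
    simp only [Finset.mem_coe, Finset.mem_sigma, Finset.mem_filter, Finset.mem_univ, true_and, Finset.mem_powerset] at hx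
    obtain ⟨⟨⟨hP, h1⟩, hR, h2⟩, hQ, h3, h4, h5, h6⟩ := hx
    obtain ⟨q, hq, e⟩ := triple_surj hP hQ hR
    refine ⟨q, mem_T.2 ?_, e⟩
    rw [hq.valid_iff]
    simp only [triple, Sigma.mk.injEq, heq_eq_eq] at e
    obtain ⟨⟨rfl, rfl⟩, rfl⟩ := e
    exact ⟨h1, h2, h3, h4, h5, h6⟩
  · intro q hq
    exact (term_eq E α β t γ W a (mem_T.1 hq)).symm
end

/-! ### Conclusion -/

theorem stmt16 {M : Type*} [Ring M] [Algebra ℂ M] (E : M →ₗ[ℂ] ℂ) (α β t γ : ℂ)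
    (W : (m : ℕ) → (Fin m → M) → TensorAlgebra ℂ M)
    (hW0 : ∀ a : Fin 0 → M, W 0 a = 1)
    (hW1 : ∀ a : Fin 1 → M,
      W 1 a = TensorAlgebra.ι ℂ (a 0) - (α * E (a 0)) • 1)
    (hW2 : ∀ a : Fin 2 → M,
      W 2 a =
        W 1 (Fin.init a) * TensorAlgebra.ι ℂ (a 1)
          - (α * E (a 1)) • W 1 (Fin.init a)
          - β • W 1 (Fin.snoc (Fin.init (Fin.init a)) (a 0 * a 1))
          - (t * E (a 0 * a 1)) • W 0 (Fin.init (Fin.init a)))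
    (hWrec : ∀ (m : ℕ) (a : Fin (m + 3) → M),
      W (m + 3) a =
        W (m + 2) (Fin.init a) * TensorAlgebra.ι ℂ (a (Fin.last (m + 2)))
          - (α * E (a (Fin.last (m + 2)))) • W (m + 2) (Fin.init a)
          - β • W (m + 2) (Fin.snoc (Fin.init (Fin.init a))
              (a (Fin.last (m + 1)).castSucc * a (Fin.last (m + 2))))
          - (t * E (a (Fin.last (m + 1)).castSucc * a (Fin.last (m + 2)))) •
              W (m + 1) (Fin.init (Fin.init a))
          - γ • W (m + 1) (Fin.snoc (Fin.init (Fin.init (Fin.init a)))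
              (a (Fin.last m).castSucc.castSucc * a (Fin.last (m + 1)).castSucc
                * a (Fin.last (m + 2)))))
    (n : ℕ) (a : Fin n → M) :
    (List.ofFn fun i => TensorAlgebra.ι ℂ (a i)).prod
      = ∑ π ∈ Finset.univ.filter (fun π : Finset (Finset (Fin n)) =>
            IsPartition π ∧ IsNoncrossing π),
          ∑ S ∈ π.powerset.filter (fun S => ∀ B ∈ S, IsOuter π B),
            (Ccoef α β t γ π S * ∏ U ∈ π \ S, E (aProd a U)) •
              W (maxElts S).length (fun j => aProd a (blockOf S ((maxElts S).get j))) := by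
  have hW := wrec_of E α β t γ W hW0 hW1 hW2 hWrec
  rw [← sum_transfer, ← sum_val (ext0 a) hW n]
  congr 1
  refine List.ext_getElem (by simp) fun i h1 h2 => ?_
  have hi : i < n := by simpa using h1
  simp [ext0, hi]
end
end

section
/- Let M be an associative ℂ-algebra, E : M → ℂ a linear functional, fix α,β,t,γ ∈ ℂ, and let W_n : M^n → Γ(M) be the multilinear maps determined by W() = 1, W(a₁) = X(a₁) − αE(a₁), and for n ≥ 1: W(a₁,…,a_{n+1}) = W(a₁,…,a_n)·X(a_{n+1}) − α·E(a_{n+1})·W(a₁,…,a_n) − β·W(a₁,…,a_{n−1}, a_n a_{n+1}) − t·E(a_n a_{n+1})·W(a₁,…,a_{n−1}) − γ·W(a₁,…,a_{n−2}, a_{n−1} a_n a_{n+1}), where the γ-term is omitted when n = 1. Define sequences (o_k), (c_k) by o_0 = 0, o_1 = 1, o_k = β·o_{k−1} − γ·o_{k−2} for k ≥ 2, and c_k = α·o_k − t·o_{k−1} for k ≥ 1. Then for all a₁,…,a_n ∈ M: W(a₁,…,a_n) = Σ_{(π,S)} (−1)^{n−|S|} · (Π_{U ∈ π∖S} c_{|U|}·E(a_U))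 · (Π_{V ∈ S} o_{|V|}) · X(a_{V₁})X(a_{V₂})⋯X(a_{V_m}), where the sum is over all pairs (π,S) with π an interval partition of {1,…,n} and S any set of blocks of π (blocks in S open, the rest closed), |S| is the number of open blocks, and V₁,…,V_m are the open blocks listed in left-to-right order. -/
/-! The expansion is characterised by a one-step convolution over its last block. Put
`T k p = (-1)^(k+1) o_k X(p) + (-1)^k c_k E(p)`: this is the joint contribution of the open and the
closed choice for a block of `k` elements with ordered product `p`. An interval partition of
`{1, …, n + 1}` is an interval partition of `{1, …, j}` together with the block `{j + 1, …, n + 1}`,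
so the right-hand side `F` satisfies

  `F(a₁, …, aₙ₊₁) = ∑ j ≤ n, F(a₁, …, aⱼ) * T (n + 1 - j) (aⱼ₊₁ ⋯ aₙ₊₁)`,

with `X`-factors in the right order because the last block is the rightmost one
(`sum_intervalPartitions_succ`, `weight_add`).

The solution of this convolution is computed by a recursion on the reversed list of arguments:
`growBlock k p r` sums over all ways in which a last block that already has `k` elements and
product `p` can swallow further elements of `r`. From the recurrences of `o` and `c`,
`T (k + 2) = -β T (k + 1) - γ T k` for `k ≥ 1`, and `T 2 p = -β T 1 p - t E(p)`. The first
identity passes to `growBlock` (`growBlock_add_two`); together with the second one it gives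
`growBlock_two_cons`, the substance of the recursion defining `W` (`eq_revExpansion`).
-/

open Finset
open scoped Classical

noncomputable section

/-- An interval partition: each block is a set of consecutive integers. -/
def IsIntervalPartition {n : ℕ} (P : Finset (Finset (Fin n))) : Prop :=
  ∀ B ∈ P, ∀ i ∈ B, ∀ j ∈ B, ∀ k : Fin n, i ≤ k → k ≤ j → k ∈ B

/-- The sequence `o_0 = 0`, `o_1 = 1`, `o_k = β o_{k-1} - γ o_{k-2}`. -/
def oSeq (β γ : ℂ) : ℕ → ℂ
  | 0 => 0
  | 1 => 1
  | k + 2 => β * oSeq β γ (k + 1) - γ * oSeq β γ k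

/-- The sequence `c_k = α o_k - t o_{k-1}` (for `k ≥ 1`). -/
def cSeq (α β t γ : ℂ) (k : ℕ) : ℂ :=
  α * oSeq β γ k - t * oSeq β γ (k - 1)

section

variable {M : Type*} [Ring M] [Algebra ℂ M]

/-! ### The convolution and the recursion of `W` -/

/-- The total contribution, open plus closed, of a block with `k` elements and ordered product `p`.
The exponent `k + 1` stands for `k - 1`, to avoid truncated subtraction. -/
def lastBlockTerm (E : M →ₗ[ℂ] ℂ) (α β t γ : ℂ) (k : ℕ) (p : M) : TensorAlgebra ℂ M :=
  ((-1) ^ (k + 1) * oSeq β γ k) • TensorAlgebra.ι ℂ p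
    + ((-1) ^ k * (cSeq α β t γ k * E p)) • 1

/-- `growBlock E α β t γ k p r` is the sum of the expansion over the configurations in which the
last block contains `k` given elements with product `p`, preceded by the elements of `r` listed
from right to left. Either the block ends here and the elements of `r` are expanded
independently, or the block absorbs the head of `r`. -/
def growBlock (E : M →ₗ[ℂ] ℂ) (α β t γ : ℂ) : ℕ → M → List M → TensorAlgebra ℂ M
  | k, p, [] => lastBlockTerm E α β t γ k p
  | k, p, x :: r =>
      growBlock E α β t γ 1 x r * lastBlockTerm E α β t γ k p
        + growBlock E α β t γ (k + 1) (x * p) r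

/-- The expansion of `W` on a list of arguments, listed from right to left. -/
def revExpansion (E : M →ₗ[ℂ] ℂ) (α β t γ : ℂ) : List M → TensorAlgebra ℂ M
  | [] => 1
  | x :: r => growBlock E α β t γ 1 x r

section
variable (E : M →ₗ[ℂ] ℂ) (α β t γ : ℂ)

local notation "T" => lastBlockTerm E α β t γ
local notation "B" => growBlock E α β t γ
local notation "G" => revExpansion E α β t γ

theorem lastBlockTerm_one (p : M) : T 1 p = TensorAlgebra.ι ℂ p - (α * E p) • 1 := by
  simp [lastBlockTerm, cSeq, oSeq, sub_eq_add_neg]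

theorem lastBlockTerm_two (p : M) : T 2 p = -(β • T 1 p) - (t * E p) • 1 := by
  simp only [lastBlockTerm, cSeq, oSeq, Nat.add_one_sub_one, Nat.sub_self]
  module

theorem lastBlockTerm_add_two (k : ℕ) (p : M) :
    T (k + 3) p = -(β • T (k + 2) p) - γ • T (k + 1) p := by
  simp only [lastBlockTerm, cSeq, oSeq, pow_succ, Nat.add_sub_cancel, Nat.add_succ_sub_one]
  module

theorem growBlock_add_two (r : List M) (k : ℕ) (p : M) :
    B (k + 3) p r = -(β • B (k + 2) p r) - γ • B (k + 1) p r := by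
  induction r generalizing k p with
  | nil => simpa [growBlock] using lastBlockTerm_add_two E α β t γ k p
  | cons x r ih =>
    simp only [growBlock, lastBlockTerm_add_two, ih, mul_sub, mul_neg, mul_smul_comm]
    module

theorem revExpansion_cons_cons (x y : M) (r : List M) :
    G (x :: y :: r) = G (y :: r) * T 1 x + B 2 (y * x) r := rfl

theorem growBlock_two_cons (p z : M) (r : List M) :
    B 2 p (z :: r) = -(β • G (p :: z :: r)) - (t * E p) • G (z :: r) - γ • G (z * p :: r) := by
  simp only [revExpansion, growBlock, growBlock_add_two, lastBlockTerm_two, mul_sub, mul_neg,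
    mul_smul_comm, mul_one, Nat.reduceAdd]
  module

/-- Unrolled form of `growBlock`: the block absorbs exactly `i` elements of `r`. -/
theorem growBlock_eq_sum (r : List M) (k : ℕ) (p : M) :
    B k p r = ∑ i ∈ Finset.range (r.length + 1),
      G (r.drop i) * T (k + i) ((r.take i).reverse.prod * p) := by
  induction r generalizing k p with
  | nil => simp [growBlock, revExpansion]
  | cons x r ih =>
    rw [List.length_cons, Finset.sum_range_succ', growBlock, ih (k + 1), add_comm]
    simp [revExpansion, add_assoc, add_comm 1, mul_assoc]

theorem reverse_ofFn_succ {M : Type*} {n : ℕ} (a : Fin (n + 1) → M) :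
    (List.ofFn a).reverse = a (Fin.last n) :: (List.ofFn (Fin.init a)).reverse := by
  rw [List.ofFn_succ', List.concat_eq_append, List.reverse_append]
  rfl

/-- The recursion determines `W`, and `revExpansion` satisfies it. -/
theorem eq_revExpansion (W : (m : ℕ) → (Fin m → M) → TensorAlgebra ℂ M)
    (hW0 : ∀ a : Fin 0 → M, W 0 a = 1)
    (hW1 : ∀ a : Fin 1 → M,
      W 1 a = TensorAlgebra.ι ℂ (a 0) - (α * E (a 0)) • 1)
    (hW2 : ∀ a : Fin 2 → M,
      W 2 a =
        W 1 (Fin.init a) * TensorAlgebra.ι ℂ (a 1)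
          - (α * E (a 1)) • W 1 (Fin.init a)
          - β • W 1 (Fin.snoc (Fin.init (Fin.init a)) (a 0 * a 1))
          - (t * E (a 0 * a 1)) • W 0 (Fin.init (Fin.init a)))
    (hWrec : ∀ (m : ℕ) (a : Fin (m + 3) → M),
      W (m + 3) a =
        W (m + 2) (Fin.init a) * TensorAlgebra.ι ℂ (a (Fin.last (m + 2)))
          - (α * E (a (Fin.last (m + 2)))) • W (m + 2) (Fin.init a)
          - β • W (m + 2) (Fin.snoc (Fin.init (Fin.init a))
              (a (Fin.last (m + 1)).castSucc * a (Fin.last (m + 2))))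
          - (t * E (a (Fin.last (m + 1)).castSucc * a (Fin.last (m + 2)))) •
              W (m + 1) (Fin.init (Fin.init a))
          - γ • W (m + 1) (Fin.snoc (Fin.init (Fin.init (Fin.init a)))
              (a (Fin.last m).castSucc.castSucc * a (Fin.last (m + 1)).castSucc
                * a (Fin.last (m + 2)))))
    (n : ℕ) (a : Fin n → M) : W n a = G (List.ofFn a).reverse := by
  induction n using Nat.strong_induction_on with
  | _ n ih =>
  match n with
  | 0 => simp [hW0, revExpansion]
  | 1 => simp [hW1, revExpansion, growBlock, lastBlockTerm_one]
  | 2 =>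
    rw [hW2, ih 1 (by simp), ih 1 (by simp), ih 0 (by simp)]
    simp [revExpansion, growBlock, lastBlockTerm_two, lastBlockTerm_one, Fin.init, Fin.snoc]
    simp only [mul_sub, mul_smul_comm, mul_one]
    module
  | m + 3 =>
    rw [hWrec, ih (m + 2) (by simp), ih (m + 2) (by simp), ih (m + 1) (by simp),
      ih (m + 1) (by simp)]
    simp only [reverse_ofFn_succ, Fin.init_snoc, Fin.snoc_last, Fin.init]
    rw [revExpansion_cons_cons _ _ _ _ _ (a (Fin.last (m + 2))), growBlock_two_cons, lastBlockTerm_one, mul_sub, mul_smul_comm,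
      mul_one, mul_assoc]
    module

/-- The convolution identity: `j` is the number of arguments to the left of the last block. -/
theorem revExpansion_ofFn_succ {n : ℕ} (a : Fin (n + 1) → M) :
    G (List.ofFn a).reverse = ∑ j : Fin (n + 1),
      G (List.ofFn fun i : Fin j => a (i.castLE j.2.le)).reverse
        * T (n + 1 - j) ((List.ofFn a).drop j).prod := by
  have htake (j : Fin (n + 1)) :
      (List.ofFn fun i : Fin j => a (i.castLE j.2.le)) = (List.ofFn (Fin.init a)).take j := by
    apply List.ext_getElem
    · simp; omega
    · intro i h1 h2
      simp [Fin.init, Fin.castLE]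
  have hdrop (j : ℕ) (hj : j ≤ n) :
      ((List.ofFn a).drop j).prod = ((List.ofFn (Fin.init a)).drop j).prod * a (Fin.last n) := by
    rw [List.ofFn_succ', List.concat_eq_append, List.drop_append_of_le_length (by simpa using hj)]
    simp [Fin.init_def]
  simp only [htake]
  rw [Fin.sum_univ_eq_sum_range (fun j => G ((List.ofFn (Fin.init a)).take j).reverse
        * T (n + 1 - j) ((List.ofFn a).drop j).prod) (n + 1),
    ← Finset.sum_range_reflect, reverse_ofFn_succ, revExpansion, growBlock_eq_sum]
  simp only [List.length_reverse, List.length_ofFn]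
  refine Finset.sum_congr rfl fun i hi => ?_
  have hi' : i ≤ n := by simpa [Nat.lt_succ_iff] using hi
  rw [List.drop_reverse, List.take_reverse, hdrop _ (by omega), List.reverse_reverse]
  simp only [List.length_ofFn, Nat.add_sub_cancel]
  congr 2
  omega

end


/-! ### Interval partitions of `Fin (n + 1)` classified by their last block -/

/-- The inclusion of the initial segment `{0, …, j - 1}`, seen as `Fin j`, into `Fin (n + 1)`.
Its complement is `Finset.Ici j`, which plays the role of a last block. -/
def initEmb {n : ℕ} (j : Fin (n + 1)) : Fin j ↪ Fin (n + 1) :=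
  (Fin.castLEOrderEmb j.2.le).toEmbedding

theorem coe_initEmb {n : ℕ} (j : Fin (n + 1)) (x : Fin j) : (initEmb j x : ℕ) = x := rfl

theorem mem_map_initEmb {n : ℕ} {j : Fin (n + 1)} {U : Finset (Fin j)} {x : Fin (n + 1)} :
    x ∈ U.map (initEmb j) ↔ ∃ h : x < j, (⟨x, h⟩ : Fin j) ∈ U := by
  rw [Finset.mem_map]
  constructor
  · rintro ⟨y, hy, rfl⟩
    exact ⟨y.2, hy⟩
  · rintro ⟨h, hx⟩
    exact ⟨_, hx, rfl⟩

/-- A family of subsets of the initial segment `Fin j`, regarded as subsets of `Fin (n + 1)`. -/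
def liftBlocks {n : ℕ} (j : Fin (n + 1)) (P : Finset (Finset (Fin j))) :
    Finset (Finset (Fin (n + 1))) :=
  P.image (Finset.map (initEmb j))

theorem Ici_notMem_liftBlocks {n : ℕ} (j : Fin (n + 1)) (P : Finset (Finset (Fin j))) :
    Finset.Ici j ∉ liftBlocks j P := by
  intro h
  obtain ⟨U, -, hU⟩ := Finset.mem_image.1 h
  have : j ∈ U.map (initEmb j) := by simp [hU]
  obtain ⟨h, -⟩ := mem_map_initEmb.1 this
  exact lt_irrefl _ h

theorem card_liftBlocks {n : ℕ} (j : Fin (n + 1)) (P : Finset (Finset (Fin j))) :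
    (liftBlocks j P).card = P.card :=
  Finset.card_image_of_injective _ (Finset.map_injective _)

theorem liftBlocks_injective {n : ℕ} (j : Fin (n + 1)) : Function.Injective (liftBlocks j) :=
  Finset.image_injective (Finset.map_injective _)

/-- The family `P` on the initial segment `{0, …, j - 1}` together with the block
`{j, …, n}`. It is applied both to a partition and to its set of open blocks. -/
def addLast {n : ℕ} (j : Fin (n + 1)) (P : Finset (Finset (Fin j))) :
    Finset (Finset (Fin (n + 1))) :=
  insert (Finset.Ici j) (liftBlocks j P)

/-- The finset of interval partitions of `Fin n`. -/
def intervalPartitions (n : ℕ) : Finset (Finset (Finset (Fin n))) :=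
  Finset.univ.filter fun π => IsPartition π ∧ IsIntervalPartition π

theorem mem_intervalPartitions {n : ℕ} {π : Finset (Finset (Fin n))} :
    π ∈ intervalPartitions n ↔ IsPartition π ∧ IsIntervalPartition π := by
  simp [intervalPartitions]

theorem addLast_mem {n : ℕ} {j : Fin (n + 1)} {P : Finset (Finset (Fin j))}
    (hP : P ∈ intervalPartitions j) : addLast j P ∈ intervalPartitions (n + 1) := by
  rw [mem_intervalPartitions] at hP ⊢
  obtain ⟨⟨hne, huniq⟩, hint⟩ := hP
  simp only [IsPartition, IsIntervalPartition, addLast, liftBlocks, Finset.mem_insert,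
    Finset.mem_image]
  refine ⟨⟨?_, fun i => ?_⟩, ?_⟩
  · rintro _ (rfl | ⟨U, hU, rfl⟩)
    · exact ⟨j, by simp⟩
    · exact (hne U hU).map
  · rcases le_or_gt j i with hji | hij
    · refine ⟨Finset.Ici j, ⟨Or.inl rfl, by simpa using hji⟩, ?_⟩
      rintro _ ⟨rfl | ⟨U, hU, rfl⟩, hi⟩
      · rfl
      · exact absurd (mem_map_initEmb.1 hi).1 (not_lt.2 hji)
    · obtain ⟨U, ⟨hU, hi⟩, hU'⟩ := huniq ⟨i, hij⟩
      refine ⟨U.map (initEmb j), ⟨Or.inr ⟨U, hU, rfl⟩, mem_map_initEmb.2 ⟨hij, hi⟩⟩, ?_⟩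
      rintro _ ⟨rfl | ⟨V, hV, rfl⟩, hi'⟩
      · exact absurd (Finset.mem_Ici.1 hi') (not_le.2 hij)
      · rw [hU' V ⟨hV, (mem_map_initEmb.1 hi').2⟩]
  · rintro _ (rfl | ⟨U, hU, rfl⟩) x hx y hy z hxz hzy
    · exact Finset.mem_Ici.2 ((Finset.mem_Ici.1 hx).trans hxz)
    · obtain ⟨hx, hxU⟩ := mem_map_initEmb.1 hx
      obtain ⟨hy, hyU⟩ := mem_map_initEmb.1 hy
      exact mem_map_initEmb.2 ⟨hzy.trans_lt hy, hint U hU _ hxU _ hyU _ hxz hzy⟩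

theorem addLast_inj {n : ℕ} {j k : Fin (n + 1)} {P : Finset (Finset (Fin j))}
    {Q : Finset (Finset (Fin k))} (h : addLast j P = addLast k Q) :
    (⟨j, P⟩ : Σ j : Fin (n + 1), Finset (Finset (Fin j))) = ⟨k, Q⟩ := by
  have key : Finset.Ici j ∈ addLast k Q := h ▸ Finset.mem_insert_self _ _
  have hjk : j = k := by
    rcases Finset.mem_insert.1 key with h1 | h1
    · exact le_antisymm (Finset.mem_Ici.1 (h1 ▸ Finset.mem_Ici.2 le_rfl))
        (Finset.mem_Ici.1 (h1 ▸ Finset.mem_Ici.2 le_rfl))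
    · obtain ⟨U, -, hU⟩ := Finset.mem_image.1 h1
      have h2 : Fin.last n ∈ U.map (initEmb k) := by rw [hU]; simp [Fin.le_last]
      exact absurd (mem_map_initEmb.1 h2).1 (not_lt.2 (Fin.le_last _))
  subst hjk
  have : liftBlocks j P = liftBlocks j Q := by
    have h' := congrArg (fun s => s.erase (Finset.Ici j)) h
    simpa [addLast, Ici_notMem_liftBlocks] using h'
  rw [liftBlocks_injective j this]

/-- The block of an interval partition containing the largest element `n` is `{j, …, n}`, where
`j` is its minimum; the other blocks avoid it, hence partition the initial segment. -/
theorem exists_addLast {n : ℕ} {π : Finset (Finset (Fin (n + 1)))}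
    (hπ : π ∈ intervalPartitions (n + 1)) :
    ∃ (j : Fin (n + 1)) (P : Finset (Finset (Fin j))),
      P ∈ intervalPartitions j ∧ addLast j P = π := by
  obtain ⟨⟨hne, huniq⟩, hint⟩ := mem_intervalPartitions.1 hπ
  obtain ⟨L, ⟨hL, hlast⟩, -⟩ := huniq (Fin.last n)
  have hdisj {B C : Finset (Fin (n + 1))} (hB : B ∈ π) (hC : C ∈ π) {x} (hxB : x ∈ B)
      (hxC : x ∈ C) : B = C := (huniq x).unique ⟨hB, hxB⟩ ⟨hC, hxC⟩
  set j := L.min' ⟨_, hlast⟩ with hj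
  have hjL : j ∈ L := Finset.min'_mem _ _
  have hLj : L = Finset.Ici j := by
    ext x
    rw [Finset.mem_Ici]
    exact ⟨fun hx => Finset.min'_le _ _ hx, fun hx => hint L hL j hjL _ hlast x hx (Fin.le_last _)⟩
  clear_value j
  subst hLj
  have hmap {C : Finset (Fin (n + 1))} (hC : C ∈ π) (hCj : C ≠ Finset.Ici j) :
      ∃ U : Finset (Fin j), U.map (initEmb j) = C := by
    refine ⟨Finset.univ.filter fun i => initEmb j i ∈ C, ?_⟩
    ext x
    rw [mem_map_initEmb]
    constructor
    · rintro ⟨h, hx⟩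
      exact (Finset.mem_filter.1 hx).2
    · intro hx
      have hxj : x < j := not_le.1 fun h => hCj (hdisj hC hL hx (Finset.mem_Ici.2 h))
      exact ⟨hxj, Finset.mem_filter.2 ⟨Finset.mem_univ _, hx⟩⟩
  refine ⟨j, Finset.univ.filter fun U => U.map (initEmb j) ∈ π, ?_, ?_⟩
  · rw [mem_intervalPartitions]
    simp only [IsPartition, IsIntervalPartition, Finset.mem_filter, Finset.mem_univ, true_and]
    refine ⟨⟨fun U hU => Finset.map_nonempty.1 (hne _ hU), fun i => ?_⟩, ?_⟩
    · obtain ⟨C, ⟨hC, hi⟩, -⟩ := huniq (initEmb j i)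
      obtain ⟨U, rfl⟩ := hmap hC (by rintro rfl; exact absurd (Finset.mem_Ici.1 hi) (not_le.2 i.2))
      refine ⟨U, ⟨hC, (Finset.mem_map' _).1 hi⟩, fun V hV => ?_⟩
      exact Finset.map_injective _ (hdisj hV.1 hC (Finset.mem_map_of_mem _ hV.2) hi)
    · intro U hU x hx y hy z hxz hzy
      exact (Finset.mem_map' _).1 (hint _ hU _ (Finset.mem_map_of_mem (initEmb j) hx) _
        (Finset.mem_map_of_mem _ hy) (initEmb j z) hxz hzy)
  · ext C
    simp only [addLast, liftBlocks, Finset.mem_insert, Finset.mem_image, Finset.mem_filter,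
      Finset.mem_univ, true_and]
    constructor
    · rintro (rfl | ⟨U, hU, rfl⟩)
      exacts [hL, hU]
    · intro hC
      by_cases h : C = Finset.Ici j
      · exact Or.inl h
      · obtain ⟨U, rfl⟩ := hmap hC h
        exact Or.inr ⟨U, hC, rfl⟩

theorem sum_intervalPartitions_succ {A : Type*} [AddCommMonoid A] {n : ℕ}
    (f : Finset (Finset (Fin (n + 1))) → A) :
    ∑ π ∈ intervalPartitions (n + 1), f π
      = ∑ j : Fin (n + 1), ∑ P ∈ intervalPartitions j, f (addLast j P) := by
  rw [Finset.sum_sigma']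
  symm
  refine Finset.sum_bij (fun x _ => addLast x.1 x.2) ?_ ?_ ?_ ?_
  · intro x hx
    exact addLast_mem (Finset.mem_sigma.1 hx).2
  · intro x _ y _ h
    exact addLast_inj h
  · intro π hπ
    obtain ⟨j, P, hP, h⟩ := exists_addLast hπ
    exact ⟨⟨j, P⟩, by simpa using hP, h⟩
  · intros; rfl

/-- The last block `{j, …, n}` is either closed or open. -/
theorem sum_powerset_addLast {A : Type*} [AddCommMonoid A] {n : ℕ} (j : Fin (n + 1))
    (P : Finset (Finset (Fin j))) (f : Finset (Finset (Fin (n + 1))) → A) :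
    ∑ S ∈ (addLast j P).powerset, f S
      = ∑ S ∈ P.powerset, (f (liftBlocks j S) + f (addLast j S)) := by
  rw [addLast, Finset.sum_powerset_insert (Ici_notMem_liftBlocks j P), ← Finset.sum_add_distrib,
    liftBlocks, Finset.powerset_image, Finset.sum_image]
  · rfl
  · exact fun _ _ _ _ h => liftBlocks_injective j h

/-- A partition of `Fin n` has at most `n` blocks, so the subtraction in the exponent
`n - S.card` of the expansion is not truncated. -/
theorem card_le_of_subset {n : ℕ} {π S : Finset (Finset (Fin n))} (hπ : IsPartition π)
    (hS : S ⊆ π) : S.card ≤ n := by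
  refine (Finset.card_le_card_biUnion (f := id) ?_ fun B hB => hπ.1 B (hS hB)).trans
    ((Finset.card_le_univ _).trans_eq (Fintype.card_fin n))
  intro B hB C hC hBC
  refine Finset.disjoint_left.2 fun x hx hx' => hBC ?_
  exact (hπ.2 x).unique ⟨hS hB, hx⟩ ⟨hS hC, hx'⟩

theorem aProd_map_initEmb {M : Type*} [Ring M] {n : ℕ} (a : Fin (n + 1) → M) (j : Fin (n + 1))
    (U : Finset (Fin j)) : aProd a (U.map (initEmb j)) = aProd (a ∘ initEmb j) U := by
  rw [aProd, aProd, ← List.map_map]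
  congr 2
  exact (Finset.map_sort (initEmb j) U (· ≤ ·) (· ≤ ·) fun _ _ _ _ => Iff.rfl).symm

theorem aProd_Ici {M : Type*} [Ring M] {n : ℕ} (a : Fin (n + 1) → M) (j : Fin (n + 1)) :
    aProd a (Finset.Ici j) = ((List.ofFn a).drop j).prod := by
  rw [aProd, List.ofFn_eq_map, ← List.map_drop]
  congr 2
  refine (Finset.sortedLT_sort _).eq_of_mem_iff ?_ fun x => ?_
  · exact ((List.sortedLT_finRange _).pairwise.sublist (List.drop_sublist _ _)).sortedLT
  · rw [Finset.mem_sort, Finset.mem_Ici, List.mem_drop_iff_getElem]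
    simp only [List.getElem_finRange, List.length_finRange]
    constructor
    · intro h
      exact ⟨x - j, by omega, by ext; simp; omega⟩
    · rintro ⟨i, hi, rfl⟩
      simp [Fin.le_def]

theorem mem_maxElts {n : ℕ} {T : Finset (Finset (Fin n))} {x : Fin n} :
    x ∈ maxElts T ↔ ∃ B ∈ T, x ∈ B ∧ ∀ y ∈ B, y ≤ x := by
  simp [maxElts]

theorem sortedLT_maxElts {n : ℕ} (T : Finset (Finset (Fin n))) : (maxElts T).SortedLT :=
  Finset.sortedLT_sort _

theorem maxElts_liftBlocks {n : ℕ} (j : Fin (n + 1)) (S : Finset (Finset (Fin j))) :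
    maxElts (liftBlocks j S) = (maxElts S).map (initEmb j) := by
  refine (sortedLT_maxElts _).eq_of_mem_iff ?_ fun x => ?_
  · exact ((sortedLT_maxElts S).pairwise.map (initEmb j) fun _ _ h => h).sortedLT
  · simp only [mem_maxElts, liftBlocks, List.mem_map, Finset.mem_image]
    constructor
    · rintro ⟨_, ⟨U, hU, rfl⟩, hx, hmax⟩
      obtain ⟨h, hx⟩ := mem_map_initEmb.1 hx
      exact ⟨⟨x, h⟩, ⟨U, hU, hx, fun y hy => hmax _ (Finset.mem_map_of_mem _ hy)⟩, rfl⟩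
    · rintro ⟨v, ⟨U, hU, hv, hmax⟩, rfl⟩
      refine ⟨_, ⟨U, hU, rfl⟩, Finset.mem_map_of_mem _ hv, fun y hy => ?_⟩
      obtain ⟨h, hy⟩ := mem_map_initEmb.1 hy
      exact hmax _ hy

theorem maxElts_addLast {n : ℕ} (j : Fin (n + 1)) (S : Finset (Finset (Fin j))) :
    maxElts (addLast j S) = (maxElts S).map (initEmb j) ++ [Fin.last n] := by
  rw [← maxElts_liftBlocks]
  refine (sortedLT_maxElts _).eq_of_mem_iff ?_ fun x => ?_
  · refine List.Pairwise.sortedLT (List.pairwise_append.2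
      ⟨(sortedLT_maxElts _).pairwise, List.pairwise_singleton _ _, ?_⟩)
    intro x hx y hy
    rw [List.mem_singleton.1 hy]
    rw [maxElts_liftBlocks] at hx
    obtain ⟨v, -, rfl⟩ := List.mem_map.1 hx
    exact lt_of_lt_of_le (b := j) v.2 (Fin.le_last _)
  · simp only [mem_maxElts, addLast, Finset.exists_mem_insert, List.mem_append,
      List.mem_singleton, Finset.mem_Ici]
    rw [or_comm]
    refine or_congr_right ⟨fun h => ?_, ?_⟩
    · exact le_antisymm (Fin.le_last _) (h.2 _ (Fin.le_last _))
    · rintro rfl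
      exact ⟨Fin.le_last _, fun y _ => Fin.le_last _⟩

theorem blockOf_liftBlocks {n : ℕ} (j : Fin (n + 1)) (S : Finset (Finset (Fin j))) (v : Fin j) :
    blockOf (liftBlocks j S) (initEmb j v) = (blockOf S v).map (initEmb j) := by
  ext x
  simp only [blockOf, liftBlocks, Finset.mem_filter, Finset.mem_univ, true_and, mem_map_initEmb,
    Finset.exists_mem_image]
  constructor
  · rintro ⟨U, hU, ⟨_, hv⟩, hx, hxU⟩
    exact ⟨hx, U, hU, hv, hxU⟩
  · rintro ⟨hx, U, hU, hv, hxU⟩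
    exact ⟨U, hU, ⟨v.2, hv⟩, hx, hxU⟩

theorem blockOf_addLast {n : ℕ} (j : Fin (n + 1)) (S : Finset (Finset (Fin j))) (v : Fin j) :
    blockOf (addLast j S) (initEmb j v) = (blockOf S v).map (initEmb j) := by
  have hv : ¬ j ≤ initEmb j v := not_le.2 v.2
  rw [← blockOf_liftBlocks]
  simp [blockOf, addLast, hv]

theorem blockOf_addLast_last {n : ℕ} (j : Fin (n + 1)) (S : Finset (Finset (Fin j))) :
    blockOf (addLast j S) (Fin.last n) = Finset.Ici j := by
  have hlast (U : Finset (Fin j)) : Fin.last n ∉ U.map (initEmb j) := fun h =>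
    absurd (mem_map_initEmb.1 h).1 (not_lt.2 (Fin.le_last _))
  ext x
  simp [blockOf, addLast, liftBlocks, hlast, Fin.le_last, -Finset.mem_map]

/-! ### The sum over interval partitions as a convolution -/

section
variable (E : M →ₗ[ℂ] ℂ) (α β t γ : ℂ)

/-- The summand of the expansion for the interval partition `π` with open blocks `S`. -/
def weight {n : ℕ} (a : Fin n → M) (π S : Finset (Finset (Fin n))) : TensorAlgebra ℂ M :=
  ((-1 : ℂ) ^ (n - S.card)
      * (∏ U ∈ π \ S, cSeq α β t γ U.card * E (aProd a U))
      * ∏ V ∈ S, oSeq β γ V.card) •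
    ((maxElts S).map fun v => TensorAlgebra.ι ℂ (aProd a (blockOf S v))).prod

/-- Fixing the configuration on the initial segment, the closed and the open choice for the last
block add up to the factor `lastBlockTerm`. -/
theorem weight_add {n : ℕ} (a : Fin (n + 1) → M) (j : Fin (n + 1))
    {P S : Finset (Finset (Fin j))} (hP : P ∈ intervalPartitions j) (hS : S ⊆ P) :
    weight E α β t γ a (addLast j P) (liftBlocks j S)
        + weight E α β t γ a (addLast j P) (addLast j S)
      = weight E α β t γ (a ∘ initEmb j) P S
        * lastBlockTerm E α β t γ (n + 1 - j) (aProd a (Finset.Ici j)) := by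
  have hcard : S.card ≤ j := card_le_of_subset (mem_intervalPartitions.1 hP).1 hS
  have hjn : (j : ℕ) ≤ n := Nat.lt_succ_iff.1 j.2
  have hL := Ici_notMem_liftBlocks j
  have hprod (f : Finset (Fin (n + 1)) → ℂ) (Q : Finset (Finset (Fin j))) :
      ∏ U ∈ liftBlocks j Q, f U = ∏ U ∈ Q, f (U.map (initEmb j)) :=
    Finset.prod_image fun _ _ _ _ h => Finset.map_injective _ h
  have hsd : liftBlocks j P \ liftBlocks j S = liftBlocks j (P \ S) :=
    (Finset.image_sdiff _ _ (Finset.map_injective _)).symm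
  have hclosed : addLast j P \ liftBlocks j S = insert (Finset.Ici j) (liftBlocks j (P \ S)) := by
    rw [addLast, Finset.insert_sdiff_of_notMem _ (hL S), hsd]
  have hopen : addLast j P \ addLast j S = liftBlocks j (P \ S) := by
    rw [addLast, addLast, Finset.insert_sdiff_insert, Finset.sdiff_insert_of_notMem (hL P), hsd]
  have e1 : (-1 : ℂ) ^ (n + 1 - S.card) = (-1) ^ (j - S.card) * (-1) ^ (n + 1 - j) := by
    rw [← pow_add]; congr 1; omega
  have e2 : (-1 : ℂ) ^ (n + 1 - (S.card + 1)) = (-1) ^ (j - S.card) * (-1) ^ (n + 1 - j + 1) := by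
    rw [show n + 1 - (j : ℕ) + 1 = (n - j) + 2 by omega, pow_add, neg_one_sq, mul_one, ← pow_add]
    congr 1; omega
  simp only [weight, hclosed, hopen, Finset.prod_insert (hL _), maxElts_liftBlocks, maxElts_addLast,
    List.map_append, List.map_map, List.map_cons, List.map_nil,
    List.prod_append, Function.comp_def, blockOf_liftBlocks,
    blockOf_addLast, blockOf_addLast_last, aProd_map_initEmb, hprod, Finset.card_map, card_liftBlocks]
  rw [addLast, Finset.prod_insert (hL _), Finset.card_insert_of_notMem (hL _), card_liftBlocks,
    hprod, e1, e2]
  simp only [Finset.card_map, Fin.card_Ici, lastBlockTerm, List.prod_singleton, mul_add, mul_smul_comm, smul_mul_assoc, mul_one]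
  module

/-- The sum over interval partitions satisfies the same convolution as `revExpansion`. -/
theorem sum_weight_eq {n : ℕ} (a : Fin n → M) :
    ∑ π ∈ intervalPartitions n, ∑ S ∈ π.powerset, weight E α β t γ a π S
      = revExpansion E α β t γ (List.ofFn a).reverse := by
  induction n using Nat.strong_induction_on with
  | _ n ih =>
  match n with
  | 0 =>
    have : intervalPartitions 0 = {∅} := by
      ext π
      rw [mem_intervalPartitions, Finset.mem_singleton]
      constructor
      · rintro ⟨⟨h, -⟩, -⟩
        refine Finset.eq_empty_of_forall_notMem fun B hB => ?_
        obtain ⟨x, -⟩ := h B hB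
        exact x.elim0
      · rintro rfl
        simp [IsPartition, IsIntervalPartition]
    simp [this, weight, maxElts, revExpansion]
  | n + 1 =>
    rw [sum_intervalPartitions_succ, revExpansion_ofFn_succ]
    refine Finset.sum_congr rfl fun j _ => ?_
    rw [← aProd_Ici]
    have := ih j j.2 (a ∘ initEmb j)
    rw [show (fun i : Fin j => a (i.castLE j.2.le)) = a ∘ initEmb j from rfl, ← this,
      Finset.sum_mul]
    refine Finset.sum_congr rfl fun P hP => ?_
    rw [sum_powerset_addLast, Finset.sum_mul]
    exact Finset.sum_congr rfl fun S hS =>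
      weight_add E α β t γ a j hP (Finset.mem_powerset.1 hS)

end

end

theorem stmt17 {M : Type*} [Ring M] [Algebra ℂ M] (E : M →ₗ[ℂ] ℂ) (α β t γ : ℂ)
    (W : (m : ℕ) → (Fin m → M) → TensorAlgebra ℂ M)
    (hW0 : ∀ a : Fin 0 → M, W 0 a = 1)
    (hW1 : ∀ a : Fin 1 → M,
      W 1 a = TensorAlgebra.ι ℂ (a 0) - (α * E (a 0)) • 1)
    (hW2 : ∀ a : Fin 2 → M,
      W 2 a =
        W 1 (Fin.init a) * TensorAlgebra.ι ℂ (a 1)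
          - (α * E (a 1)) • W 1 (Fin.init a)
          - β • W 1 (Fin.snoc (Fin.init (Fin.init a)) (a 0 * a 1))
          - (t * E (a 0 * a 1)) • W 0 (Fin.init (Fin.init a)))
    (hWrec : ∀ (m : ℕ) (a : Fin (m + 3) → M),
      W (m + 3) a =
        W (m + 2) (Fin.init a) * TensorAlgebra.ι ℂ (a (Fin.last (m + 2)))
          - (α * E (a (Fin.last (m + 2)))) • W (m + 2) (Fin.init a)
          - β • W (m + 2) (Fin.snoc (Fin.init (Fin.init a))
              (a (Fin.last (m + 1)).castSucc * a (Fin.last (m + 2))))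
          - (t * E (a (Fin.last (m + 1)).castSucc * a (Fin.last (m + 2)))) •
              W (m + 1) (Fin.init (Fin.init a))
          - γ • W (m + 1) (Fin.snoc (Fin.init (Fin.init (Fin.init a)))
              (a (Fin.last m).castSucc.castSucc * a (Fin.last (m + 1)).castSucc
                * a (Fin.last (m + 2)))))
    (n : ℕ) (a : Fin n → M) :
    W n a
      = ∑ π ∈ Finset.univ.filter (fun π : Finset (Finset (Fin n)) =>
            IsPartition π ∧ IsIntervalPartition π),
          ∑ S ∈ π.powerset,
            ((-1 : ℂ) ^ (n - S.card)
                * (∏ U ∈ π \ S, cSeq α β t γ U.card * E (aProd a U))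
                * ∏ V ∈ S, oSeq β γ V.card) •
              ((maxElts S).map fun v =>
                TensorAlgebra.ι ℂ (aProd a (blockOf S v))).prod := by
  rw [eq_revExpansion E α β t γ W hW0 hW1 hW2 hWrec, ← sum_weight_eq]
  rfl
end
end
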